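/- arXiv:math/0301245 — 3 statements merged into one kernel-verified Lean document; each statement's English description precedes it below -/
import Mathlib

section
/- (Lemma 4) The function r̂(ζ) := r(ζ)·√ζ on (0,∞) has exactly one critical point (i.e. exactly one ζ > 0 with r̂'(ζ) = 0), and at this point r̂ attains its global maximum over (0,∞). -/
open SimpleGraph

/-- A rooted tree on vertex set `Fin n`: a connected acyclic simple graph
with a distinguished root vertex. -/
structure RTree (n : ℕ) where
  adj : SimpleGraph (Fin n)
  connected : adj.Connected
  acyclic : adj.IsAcyclic
  root : Fin n

/-- `v` is a leaf of the rooted tree `t`: a vertex of degree one other than the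
root, except that in the one-vertex tree the root counts as a leaf. -/
def IsLeafV {n : ℕ} (t : RTree n) (v : Fin n) : Prop :=
  n = 1 ∨ ((t.adj.neighborSet v).ncard = 1 ∧ v ≠ t.root)

/-- The number of leaves of a rooted tree. -/
noncomputable def numLeaves {n : ℕ} (t : RTree n) : ℕ :=
  Nat.card {v : Fin n // IsLeafV t v}

/-- Root-preserving isomorphism of rooted trees. -/
def treeSetoid (n : ℕ) : Setoid (RTree n) where
  r t t' := ∃ e : t.adj ≃g t'.adj, e t.root = t'.root
  iseqv := by
    constructor
    · intro t; exact ⟨RelIso.refl _, rfl⟩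
    · rintro t t' ⟨e, he⟩
      exact ⟨e.symm, by rw [← he]; exact e.symm_apply_apply t.root⟩
    · rintro a b c ⟨e, he⟩ ⟨f, hf⟩
      exact ⟨e.trans f, by simp [RelIso.trans_apply, he, hf]⟩

/-- `aCount n k` : the number of isomorphism classes of rooted trees with `n`
vertices and exactly `k` leaves. -/
noncomputable def aCount (n k : ℕ) : ℕ :=
  Nat.card (Quotient (Setoid.comap
    (Subtype.val : {t : RTree n // numLeaves t = k} → RTree n)
    (treeSetoid n)))

/-- The real bivariate generating function `T(x,z) = Σ_{n,k} a_{n,k} x^n z^k`. -/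
noncomputable def Treal (x z : ℝ) : ℝ :=
  ∑' p : ℕ × ℕ, (aCount p.1 p.2 : ℝ) * x ^ p.1 * z ^ p.2

/-- `r(ζ)`, the radius of convergence in `x` of `T(x,ζ)` for `ζ > 0`. -/
noncomputable def rFun (ζ : ℝ) : ℝ :=
  sSup {x : ℝ | 0 < x ∧
    Summable (fun p : ℕ × ℕ => (aCount p.1 p.2 : ℝ) * x ^ p.1 * ζ ^ p.2)}

/-- `r̂(ζ) = r(ζ)·√ζ`. -/
noncomputable def rhat (ζ : ℝ) : ℝ := rFun ζ * Real.sqrt ζ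


/-! ### Combinatorics: grafting -/

section graft

variable {ι : Type} {V : ι → Type}

inductive GAdj (G : ∀ i, SimpleGraph (V i)) (r : ∀ i, V i) :
    Option (Σ i, V i) → Option (Σ i, V i) → Prop
  | up (i : ι) : GAdj G r none (some ⟨i, r i⟩)
  | down (i : ι) : GAdj G r (some ⟨i, r i⟩) none
  | inn (i : ι) (v w : V i) : (G i).Adj v w → GAdj G r (some ⟨i, v⟩) (some ⟨i, w⟩)

def graftG (G : ∀ i, SimpleGraph (V i)) (r : ∀ i, V i) : SimpleGraph (Option (Σ i, V i)) where
  Adj := GAdj G r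
  symm := ⟨by
    intro a b h
    cases h with
    | up i => exact .down i
    | down i => exact .up i
    | inn i v w h => exact .inn i w v h.symm⟩
  loopless := ⟨by
    intro a h
    rcases a with _ | ⟨i, v⟩
    · cases h
    · cases h with
      | inn _ _ _ h => exact (G i).irrefl h⟩

variable {G : ∀ i, SimpleGraph (V i)} {r : ∀ i, V i}

lemma graft_inn {i : ι} {v w : V i} :
    (graftG G r).Adj (some ⟨i, v⟩) (some ⟨i, w⟩) ↔ (G i).Adj v w := by
  constructor
  · intro h
    cases h with
    | inn _ _ _ h => exact h
  · exact .inn i v w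

lemma graft_cross {i j : ι} {v : V i} {w : V j} 
    (h : (graftG G r).Adj (some ⟨i, v⟩) (some ⟨j, w⟩)) : i = j := by
  cases h; rfl

lemma graft_none {i : ι} {v : V i} :
    (graftG G r).Adj none (some ⟨i, v⟩) ↔ v = r i := by
  constructor
  · intro h
    cases h; rfl
  · rintro rfl; exact .up i

def graftHom (G : ∀ i, SimpleGraph (V i)) (r : ∀ i, V i) (i : ι) : G i →g graftG G r where
  toFun v := some ⟨i, v⟩
  map_rel' h := .inn i _ _ h

lemma graft_connected (hc : ∀ i, (G i).Connected) : (graftG G r).Connected := by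
  have : ∀ a, (graftG G r).Reachable none a := by
    rintro (_ | ⟨i, v⟩)
    · exact Reachable.refl _
    · have h1 : (graftG G r).Reachable none (some ⟨i, r i⟩) := SimpleGraph.Adj.reachable (GAdj.up i)
      exact h1.trans (((hc i).preconnected (r i) v).map (graftHom G r i))
  exact ⟨fun a b => (this a).symm.trans (this b)⟩

lemma graft_acyclic [Finite ι] [∀ i, Finite (V i)] (hc : ∀ i, (G i).Connected)
    (ha : ∀ i, (G i).IsAcyclic) : (graftG G r).IsAcyclic := by
  classical
  have hcon : (graftG G r).Connected := graft_connected hc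
  refine (isTree_iff_connected_and_card.2 ⟨hcon, ?_⟩).2
  refine le_antisymm ?_ hcon.card_vert_le_card_edgeSet_add_one
  have := Fintype.ofFinite ι
  have := fun i => Fintype.ofFinite (V i)
  let F : (Σ i, Option (G i).edgeSet) → (graftG G r).edgeSet := fun p =>
    match p with
    | ⟨i, none⟩ => ⟨s(none, some ⟨i, r i⟩), GAdj.up i⟩
    | ⟨i, some e⟩ => (graftHom G r i).mapEdgeSet e
  have hF : Function.Surjective F := by
    rintro ⟨e, he⟩
    induction e using Sym2.ind with
    | _ a b =>
      have he' : GAdj G r a b := he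
      cases he' with
      | up i => exact ⟨⟨i, none⟩, rfl⟩
      | down i => exact ⟨⟨i, none⟩, Subtype.ext Sym2.eq_swap⟩
      | inn i v w h => exact ⟨⟨i, some ⟨s(v, w), h⟩⟩, rfl⟩
  have h1 := Nat.card_le_card_of_surjective F hF
  have h2 : Nat.card (Σ i, Option (G i).edgeSet) = Nat.card (Σ i, V i) := by
    rw [Nat.card_sigma, Nat.card_sigma]
    refine Finset.sum_congr rfl fun i _ => ?_
    rw [Finite.card_option]
    exact (isTree_iff_connected_and_card.1 ⟨hc i, ha i⟩).2
  rw [Finite.card_option]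
  omega

/-- rooted isomorphism -/
def RIso {V W : Type} (G : SimpleGraph V) (r : V) (H : SimpleGraph W) (s : W) : Prop :=
  ∃ e : G ≃g H, e r = s

lemma RIso.refl {V : Type} (G : SimpleGraph V) (r : V) : RIso G r G r := ⟨RelIso.refl _, rfl⟩

lemma RIso.symm {V W : Type} {G : SimpleGraph V} {r : V} {H : SimpleGraph W} {s : W}
    (h : RIso G r H s) : RIso H s G r := by
  obtain ⟨e, he⟩ := h
  exact ⟨e.symm, by rw [← he]; exact e.symm_apply_apply r⟩

lemma RIso.trans {V W X : Type} {G : SimpleGraph V} {r : V} {H : SimpleGraph W} {s : W}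
    {K : SimpleGraph X} {t : X}
    (h : RIso G r H s) (h' : RIso H s K t) : RIso G r K t := by
  obtain ⟨e, he⟩ := h
  obtain ⟨f, hf⟩ := h'
  exact ⟨e.trans f, by simp [RelIso.trans_apply, he, hf]⟩

variable {ι' : Type} {V' : ι' → Type} {G' : ∀ i, SimpleGraph (V' i)} {r' : ∀ i, V' i}

lemma graft_congr (σ : ι ≃ ι') (h : ∀ i, RIso (G i) (r i) (G' (σ i)) (r' (σ i))) :
    RIso (graftG G r) none (graftG G' r') none := by
  choose e he using h
  let E : (Σ i, V i) ≃ (Σ i, V' i) := 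
    Equiv.sigmaCongr σ (fun i => (e i).toEquiv)
  have hE : ∀ i v, E ⟨i, v⟩ = ⟨σ i, e i v⟩ := fun i v => rfl
  refine ⟨⟨E.optionCongr, ?_⟩, rfl⟩
  rintro (_ | ⟨i, v⟩) (_ | ⟨j, w⟩)
  · exact ⟨fun h => (by cases h), fun h => (by cases h)⟩
  · simp only [Equiv.optionCongr_apply, Option.map_none, Option.map_some, hE, graft_none]
    rw [← he j]
    exact (e j).injective.eq_iff
  · simp only [Equiv.optionCongr_apply, Option.map_none, Option.map_some, hE]
    rw [SimpleGraph.adj_comm, (graftG G r).adj_comm, graft_none, graft_none]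
    rw [← he i]
    exact (e i).injective.eq_iff
  · simp only [Equiv.optionCongr_apply, Option.map_some, hE]
    constructor
    · intro h
      have hij : i = j := σ.injective (graft_cross h)
      subst hij
      rw [graft_inn] at h ⊢
      exact (e i).map_adj_iff.1 h
    · intro h
      have hij : i = j := (graft_cross h)
      subst hij
      rw [graft_inn] at h ⊢
      exact (e i).map_adj_iff.2 h

lemma graft_idx (hc : ∀ i, (G i).Connected)
    (e : graftG G r →g graftG G' r') (hi : Function.Injective e) (he : e none = none) :
    ∃ σ : ι → ι', (∀ i, e (some ⟨i, r i⟩) = some ⟨σ i, r' (σ i)⟩) ∧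
      ∀ i v, ∃ w, e (some ⟨i, v⟩) = some ⟨σ i, w⟩ := by
  have h1 : ∀ i, ∃ j, e (some ⟨i, r i⟩) = some ⟨j, r' j⟩ := by
    intro i
    have h : (graftG G r).Adj none (some ⟨i, r i⟩) := GAdj.up i
    have h := e.map_adj h
    rw [he] at h
    generalize e (some ⟨i, r i⟩) = b at h
    cases h with
    | up j => exact ⟨j, rfl⟩
  choose σ hσ using h1
  refine ⟨σ, hσ, fun i v => ?_⟩
  obtain ⟨p⟩ := (hc i).preconnected v (r i)
  generalize hs : r i = s at p
  induction p with
  | nil => subst hs; exact ⟨_, hσ i⟩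
  | @cons a b c hab p ih =>
    obtain ⟨w, hw⟩ := ih hs
    have h := e.map_adj (graft_inn (r := r) |>.2 hab)
    rw [hw] at h
    rcases hb : e (some ⟨i, a⟩) with _ | ⟨j, x⟩
    · exact absurd (hi (hb.trans he.symm)) (by simp)
    · rw [hb] at h
      have := graft_cross h
      subst this
      exact ⟨x, rfl⟩

lemma graft_iso_inv (hc : ∀ i, (G i).Connected) (hc' : ∀ i, (G' i).Connected)
    (h : RIso (graftG G r) none (graftG G' r') none) :
    ∃ σ : ι ≃ ι', ∀ i, RIso (G i) (r i) (G' (σ i)) (r' (σ i)) := by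
  obtain ⟨e, he⟩ := h
  have he' : e.symm none = none := by rw [← he]; exact e.symm_apply_apply _
  obtain ⟨σ, h1, h2⟩ := graft_idx hc e.toHom e.injective he
  obtain ⟨τ, h3, h4⟩ := graft_idx hc' e.symm.toHom e.symm.injective he'
  change ∀ i, e _ = _ at h1
  change ∀ i v, ∃ w, e _ = _ at h2
  change ∀ i, e.symm _ = _ at h3
  change ∀ i v, ∃ w, e.symm _ = _ at h4
  have hτσ : ∀ i, τ (σ i) = i := by
    intro i
    have := congrArg e.symm (h1 i)
    rw [e.symm_apply_apply, h3] at this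
    simp only [Option.some.injEq, Sigma.mk.injEq] at this
    exact this.1.symm
  have hστ : ∀ i, σ (τ i) = i := by
    intro i
    have := congrArg e (h3 i)
    rw [e.apply_symm_apply, h1] at this
    simp only [Option.some.injEq, Sigma.mk.injEq] at this
    exact this.1.symm
  refine ⟨⟨σ, τ, hτσ, hστ⟩, fun i => ?_⟩
  choose φ hφ using h2
  have hinj : Function.Injective (φ i) := by
    intro v w hvw
    have h : e (some ⟨i, v⟩) = e (some ⟨i, w⟩) := by rw [hφ, hφ, hvw]
    simpa using e.injective h
  have hsurj : Function.Surjective (φ i) := by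
    intro w
    obtain ⟨k, v, hk, hv⟩ : ∃ k, ∃ v, k = i ∧ e.symm (some ⟨σ i, w⟩) = some ⟨k, v⟩ := by
      obtain ⟨v, hv⟩ := h4 (σ i) w
      exact ⟨_, v, hτσ i, hv⟩
    subst hk
    refine ⟨v, ?_⟩
    have := congrArg e hv
    rw [e.apply_symm_apply, hφ] at this
    simpa using this.symm
  refine ⟨⟨Equiv.ofBijective (φ i) ⟨hinj, hsurj⟩, ?_⟩, ?_⟩
  · intro v w
    change (G' (σ i)).Adj (φ i v) (φ i w) ↔ _
    rw [← graft_inn (G := G') (r := r'), ← hφ, ← hφ, e.map_adj_iff, graft_inn]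
  · change φ i (r i) = r' (σ i)
    have := (hφ i (r i)).symm.trans (h1 i)
    simpa using this

/-- leaves -/
def leafP {V : Type} (G : SimpleGraph V) (r : V) (v : V) : Prop :=
  Nat.card V = 1 ∨ ((G.neighborSet v).ncard = 1 ∧ v ≠ r)

lemma RIso.leaf {V W : Type} {G : SimpleGraph V} {r : V} {H : SimpleGraph W} {s : W}
    (h : RIso G r H s) : Nat.card {v // leafP G r v} = Nat.card {v // leafP H s v} := by
  obtain ⟨e, he⟩ := h
  refine Nat.card_congr (e.toEquiv.subtypeEquiv fun v => ?_)
  unfold leafP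
  have h1 : (H.neighborSet (e v)).ncard = (G.neighborSet v).ncard := by
    rw [← Set.ncard_image_of_injective (G.neighborSet v) e.injective]
    congr 1
    ext w
    simp only [mem_neighborSet, Set.mem_image]
    constructor
    · intro h
      refine ⟨e.symm w, ?_, e.apply_symm_apply w⟩
      rw [← e.map_adj_iff]; simpa using h
    · rintro ⟨x, hx, rfl⟩
      exact e.map_adj_iff.2 hx
  have h2 : e v ≠ s ↔ v ≠ r := by rw [← he]; exact e.injective.ne_iff
  have h3 := Nat.card_congr e.toEquiv
  change _ ↔ _ ∨ ((H.neighborSet (e v)).ncard = 1 ∧ e v ≠ s)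
  rw [h1, h2, h3]

lemma graft_leaf_some [Finite ι] [∀ i, Finite (V i)] (hc : ∀ i, (G i).Connected) (i : ι) (v : V i) :
    leafP (graftG G r) none (some ⟨i, v⟩) ↔ leafP (G i) (r i) v := by
  classical
  have hcard : Nat.card (Option (Σ i, V i)) ≠ 1 := by
    intro h
    have := (Nat.card_eq_one_iff_unique.1 h).1
    exact absurd (Subsingleton.elim none (some ⟨i, v⟩ : Option (Σ i, V i))) (by simp)
  have hsub : ∀ w, (graftG G r).neighborSet (some ⟨i, w⟩) =
      (fun w : V i => (some ⟨i, w⟩ : Option (Σ i, V i))) '' (G i).neighborSet w ∪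
       (if w = r i then {none} else ∅) := by
    intro w
    ext a
    rcases a with _ | ⟨j, x⟩
    · simp only [mem_neighborSet]
      rw [SimpleGraph.adj_comm, graft_none]
      by_cases hw : w = r i <;> simp [hw]
    · simp only [mem_neighborSet]
      have hno : (some ⟨j, x⟩ : Option (Σ i, V i)) ∉ 
        (if w = r i then {none} else ∅ : Set (Option (Σ i, V i))) := by
        by_cases hw : w = r i <;> simp [hw]
      rw [Set.mem_union, or_iff_left hno]
      constructor
      · intro h
        have := graft_cross h
        subst this
        exact ⟨x, graft_inn.1 h, rfl⟩
      · rintro ⟨y, hy, h⟩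
        rw [← h]
        exact graft_inn.2 hy
  have hinj : Function.Injective (fun w : V i => (some ⟨i, w⟩ : Option (Σ i, V i))) := by
    intro a b h; simpa using h
  unfold leafP
  rw [or_iff_right hcard, hsub]
  by_cases hv : v = r i
  · subst hv
    rw [if_pos rfl, Set.union_singleton, Set.ncard_insert_of_notMem (by simp),
      Set.ncard_image_of_injective _ hinj]
    simp only [Nat.add_eq_right, ne_eq, reduceCtorEq, not_false_eq_true, and_true, not_true, and_false, or_false]
    rw [Set.ncard_eq_zero]
    constructor
    · intro h
      rw [Nat.card_eq_one_iff_unique]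
      refine ⟨?_, ⟨r i⟩⟩
      by_contra hs
      rw [not_subsingleton_iff_nontrivial] at hs
      obtain ⟨w, hw⟩ := (hc i).preconnected.exists_adj_of_nontrivial (r i)
      have : w ∈ (G i).neighborSet (r i) := hw
      rw [h] at this
      exact this
    · intro h
      have := (Nat.card_eq_one_iff_unique.1 h).1
      ext w
      simp only [mem_neighborSet, Set.mem_empty_iff_false, iff_false]
      rw [Subsingleton.elim w (r i)]
      exact (G i).irrefl
  · rw [if_neg hv, Set.union_empty, Set.ncard_image_of_injective _ hinj]
    have : Nat.card (V i) ≠ 1 := by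
      intro h
      have := (Nat.card_eq_one_iff_unique.1 h).1
      exact hv (Subsingleton.elim _ _)
    simp [hv, this]

lemma graft_numLeaves [Fintype ι] [∀ i, Finite (V i)] (hc : ∀ i, (G i).Connected) :
    Nat.card {v // leafP (graftG G r) none v} =
      if Nat.card ι = 0 then 1 else ∑ i, Nat.card {v // leafP (G i) (r i) v} := by
  classical
  split_ifs with h0
  · have := (Nat.card_eq_zero.1 h0).resolve_right (by simpa using (inferInstance : Finite ι))
    have h1 : Nat.card (Option (Σ i, V i)) = 1 := by
      rw [Finite.card_option]; simp
    rw [← h1]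
    refine Nat.card_congr (Equiv.subtypeUnivEquiv fun v => Or.inl h1)
  · have hne : Nonempty ι := by
      by_contra h; rw [not_nonempty_iff] at h; simp at h0
    have hcard : Nat.card (Option (Σ i, V i)) ≠ 1 := by
      intro h
      have := (Nat.card_eq_one_iff_unique.1 h).1
      obtain ⟨i⟩ := hne
      exact absurd (Subsingleton.elim none (some ⟨i, r i⟩ : Option (Σ i, V i))) (by simp)
    rw [← Nat.card_sigma]
    symm
    refine Nat.card_congr (Equiv.ofBijective (fun p : (Σ i, {v // leafP (G i) (r i) v}) => 
      (⟨some ⟨p.1, p.2.1⟩, (graft_leaf_some hc _ _).2 p.2.2⟩ : {v // leafP (graftG G r) none v})) ⟨?_, ?_⟩)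
    · rintro ⟨i, v, hv⟩ ⟨j, w, hw⟩ h
      simp only [Subtype.mk.injEq, Option.some.injEq, Sigma.mk.injEq] at h
      obtain ⟨rfl, h⟩ := h
      cases h
      rfl
    · rintro ⟨_ | ⟨i, v⟩, hv⟩
      · unfold leafP at hv
        rcases hv with h | ⟨_, h⟩
        · exact absurd h hcard
        · exact absurd rfl h
      · exact ⟨⟨i, v, (graft_leaf_some hc _ _).1 hv⟩, rfl⟩

end graft

lemma tree_decomp {V : Type} [Finite V] (G : SimpleGraph V) (hc : G.Connected)
    (ha : G.IsAcyclic) (r : V) :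
    ∃ (ι : Type) (_ : Finite ι) (V' : ι → Type) (_ : ∀ i, Finite (V' i))
      (G' : ∀ i, SimpleGraph (V' i)) (r' : ∀ i, V' i),
      (∀ i, (G' i).Connected) ∧ (∀ i, (G' i).IsAcyclic) ∧
      RIso (graftG G' r') none G r := by
  classical
  let G0 := G.induce {v | v ≠ r}
  have key : ∀ v s : V, G.Walk v s → s = r → ∀ hv : v ≠ r,
      ∃ w, ∃ hw : w ≠ r, G.Adj r w ∧ G0.Reachable ⟨v, hv⟩ ⟨w, hw⟩ := by
    intro v s p
    induction p with
    | nil => intro h hv; exact absurd h hv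
    | @cons a b c hab p ih =>
      intro h hv
      by_cases hb : b = r
      · subst hb
        exact ⟨a, hv, hab.symm, Reachable.refl _⟩
      · obtain ⟨w, hw, h1, h2⟩ := ih h hb
        refine ⟨w, hw, h1, Reachable.trans ?_ h2⟩
        exact SimpleGraph.Adj.reachable (by exact hab)
  have hex : ∀ c : G0.ConnectedComponent, ∃ v : c, G.Adj r v.1.1 := by
    intro c
    induction c using ConnectedComponent.ind with
    | _ v =>
      obtain ⟨p⟩ := hc.preconnected v.1 r
      obtain ⟨w, hw, h1, h2⟩ := key _ _ p rfl v.2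
      exact ⟨⟨⟨w, hw⟩, ConnectedComponent.sound h2.symm⟩, h1⟩
  have huniq : ∀ v w : {v // v ≠ r}, G0.Reachable v w → G.Adj r v → G.Adj r w → v = w := by
    intro v w h hv hw
    obtain ⟨p, hp⟩ := h.exists_isPath
    let f : G0 →g G := ⟨Subtype.val, fun h => h⟩
    have hf : Function.Injective f := Subtype.val_injective
    have hp' := hp.map hf
    have hr : r ∉ (p.map f).support := by
      rw [Walk.support_map]
      intro h
      obtain ⟨x, _, hx⟩ := List.mem_map.1 h
      exact x.2 hx
    have hq : (Walk.cons (show G.Adj r (f v) from hv) (p.map f)).IsPath := by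
      rw [Walk.cons_isPath_iff]; exact ⟨hp', hr⟩
    have := ha.eq_snd_of_adj_start hq hw (Walk.end_mem_support _)
    rw [Walk.snd_cons] at this
    exact Subtype.ext this.symm
  choose r' hr' using hex
  let F : Option (Σ c : G0.ConnectedComponent, c) → V := fun p =>
    match p with
    | none => r
    | some ⟨_, v⟩ => v.1.1
  have hFinj : Function.Injective F := by
    rintro (_ | ⟨c, v, hv⟩) (_ | ⟨d, w, hw⟩) h
    · rfl
    · exact absurd h.symm w.2
    · exact absurd h v.2
    · have h' : v = w := Subtype.ext h
      subst h'
      have : c = d := hv.symm.trans hw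
      subst this
      rfl
  have hFsurj : Function.Surjective F := by
    intro v
    by_cases hv : v = r
    · exact ⟨none, hv.symm⟩
    · exact ⟨some ⟨G0.connectedComponentMk ⟨v, hv⟩, ⟨⟨v, hv⟩, rfl⟩⟩, rfl⟩
  have hnone : ∀ (c : G0.ConnectedComponent) (v : c), v = r' c ↔ G.Adj r v.1.1 := by
    intro c v
    constructor
    · rintro rfl; exact hr' c
    · intro h
      apply Subtype.ext
      refine huniq v.1 (r' c).1 ?_ h (hr' c)
      exact ConnectedComponent.exact (v.2.trans (r' c).2.symm)
  refine ⟨G0.ConnectedComponent, inferInstance, fun c => c, fun c => inferInstance,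
    fun c => c.toSimpleGraph, r', fun c => c.connected_toSimpleGraph,
    fun c => (ha.induce _).induce _, ⟨Equiv.ofBijective F ⟨hFinj, hFsurj⟩, ?_⟩, rfl⟩
  intro a b
  change G.Adj (F a) (F b) ↔ _
  rcases a with _ | ⟨c, v⟩ <;> rcases b with _ | ⟨d, w⟩
  · exact ⟨fun h => absurd h G.irrefl, fun h => (by cases h)⟩
  · rw [graft_none, hnone]
  · rw [SimpleGraph.adj_comm, (graftG _ r').adj_comm, graft_none, hnone]
  · constructor
    · intro h
      change G.Adj v.1.1 w.1.1 at h
      have h0 : G0.Adj v.1 w.1 := h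
      have : c = d := by
        rw [← v.2, ← w.2]
        exact ConnectedComponent.sound h0.reachable
      subst this
      exact graft_inn.2 h
    · intro h
      have := graft_cross h
      subst this
      exact graft_inn.1 h

/-! ### The type of all rooted trees up to isomorphism -/

abbrev RT : Type := Σ n, RTree n

def rtSetoid : Setoid RT where
  r t t' := RIso t.2.adj t.2.root t'.2.adj t'.2.root
  iseqv := ⟨fun _ => RIso.refl _ _, fun h => h.symm, fun h h' => h.trans h'⟩

def UT : Type := Quotient rtSetoid

def UT.mk (t : RT) : UT := Quotient.mk rtSetoid t

lemma UT_mk_eq {t t' : RT} : (UT.mk t = UT.mk t') ↔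
    RIso t.2.adj t.2.root t'.2.adj t'.2.root := Quotient.eq (r := rtSetoid)

def uSize : UT → ℕ := Quotient.lift (fun t : RT => t.1) (by
  rintro a b ⟨e, -⟩
  simpa using Fintype.card_congr e.toEquiv)

noncomputable def rtLeaves (t : RT) : ℕ := Nat.card {v // leafP t.2.adj t.2.root v}

lemma rtLeaves_eq (t : RT) : rtLeaves t = numLeaves t.2 := by
  unfold rtLeaves numLeaves
  congr! 3
  unfold leafP IsLeafV
  simp

noncomputable def uLeaves : UT → ℕ := Quotient.lift rtLeaves (fun _ _ h => RIso.leaf h)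

lemma exists_RT {V : Type} [Finite V] (G : SimpleGraph V) (hc : G.Connected)
    (ha : G.IsAcyclic) (r : V) : ∃ t : RT, RIso t.2.adj t.2.root G r ∧ t.1 = Nat.card V := by
  have e := Finite.equivFin V
  let I : G.comap e.symm ≃g G := SimpleGraph.Iso.comap e.symm G
  refine ⟨⟨Nat.card V, ⟨G.comap e.symm, I.connected_iff.2 hc, I.isAcyclic_iff.2 ha, e r⟩⟩, ⟨I, ?_⟩, rfl⟩
  exact e.symm_apply_apply r

noncomputable def graftRT {ι : Type} [Finite ι] (t : ι → RT) : RT :=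
  (exists_RT (graftG (fun i => (t i).2.adj) (fun i => (t i).2.root))
    (graft_connected fun i => (t i).2.connected)
    (graft_acyclic (fun i => (t i).2.connected) (fun i => (t i).2.acyclic)) none).choose

lemma graftRT_iso {ι : Type} [Finite ι] (t : ι → RT) :
    RIso (graftRT t).2.adj (graftRT t).2.root
     (graftG (fun i => (t i).2.adj) (fun i => (t i).2.root)) none :=
  (exists_RT (graftG (fun i => (t i).2.adj) (fun i => (t i).2.root))
    (graft_connected fun i => (t i).2.connected)
    (graft_acyclic (fun i => (t i).2.connected) (fun i => (t i).2.acyclic)) none).choose_spec.1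

lemma graftRT_size {ι : Type} [Fintype ι] (t : ι → RT) :
    (graftRT t).1 = 1 + ∑ i, (t i).1 := by
  have := (exists_RT (graftG (fun i => (t i).2.adj) (fun i => (t i).2.root))
    (graft_connected fun i => (t i).2.connected)
    (graft_acyclic (fun i => (t i).2.connected) (fun i => (t i).2.acyclic)) none).choose_spec.2
  refine this.trans ?_
  rw [Finite.card_option, Nat.card_sigma]
  simp only [Nat.card_eq_fintype_card, Fintype.card_fin]
  rw [add_comm]

lemma graftRT_leaves {ι : Type} [Fintype ι] (t : ι → RT) :
    rtLeaves (graftRT t) = if Nat.card ι = 0 then 1 else ∑ i, rtLeaves (t i) := by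
  unfold rtLeaves
  rw [RIso.leaf (graftRT_iso t)]
  exact graft_numLeaves fun i => (t i).2.connected

lemma exists_equiv_of_map_univ_eq {ι ι' β : Type} [Fintype ι] [Fintype ι'] (f : ι → β) (g : ι' → β)
    (h : Finset.univ.val.map f = Finset.univ.val.map g) : ∃ σ : ι ≃ ι', ∀ i, f i = g (σ i) := by
  classical
  have h1 : ∀ b, Nonempty ({i // f i = b} ≃ {i // g i = b}) := by
    intro b
    refine ⟨Fintype.equivOfCardEq ?_⟩
    have := congrArg (Multiset.count b) h
    rw [Multiset.count_map, Multiset.count_map] at this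
    rw [Fintype.card_subtype, Fintype.card_subtype]
    simp only [eq_comm (b := b)]
    exact this
  have h2 := fun b => (h1 b).some
  refine ⟨(Equiv.sigmaFiberEquiv f).symm.trans ((Equiv.sigmaCongrRight h2).trans (Equiv.sigmaFiberEquiv g)), ?_⟩
  intro i
  exact (h2 (f i) ⟨i, rfl⟩).2.symm

noncomputable def fam (m : Multiset UT) (i : Fin m.toList.length) : RT :=
  Quotient.out (s := rtSetoid) (m.toList.get i)

lemma fam_mk (m : Multiset UT) (i : Fin m.toList.length) : 
    UT.mk (fam m i) = m.toList.get i := Quotient.out_eq (s := rtSetoid) _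

lemma fam_map (m : Multiset UT) : 
    Finset.univ.val.map (fun i => UT.mk (fam m i)) = m := by
  have : (fun i => UT.mk (fam m i)) = m.toList.get := funext (fam_mk m)
  rw [this, Fin.univ_val_map, List.ofFn_get, Multiset.coe_toList]

noncomputable def graftU (m : Multiset UT) : UT := UT.mk (graftRT (fam m))

lemma graftU_bij : Function.Bijective graftU := by
  constructor
  · intro m m' h
    have h := UT_mk_eq.1 h
    have h := (graftRT_iso (fam m)).symm.trans (h.trans (graftRT_iso (fam m')))
    obtain ⟨σ, hσ⟩ := graft_iso_inv (fun i => (fam m i).2.connected) 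
      (fun i => (fam m' i).2.connected) h
    rw [← fam_map m, ← fam_map m']
    have : (fun i => UT.mk (fam m i)) = 
      (fun i => UT.mk (fam m' i)) ∘ σ := 
        funext fun i => UT_mk_eq.2 (hσ i)
    rw [this, ← Multiset.map_map]
    congr 1
    exact congrArg Finset.val (Finset.map_univ_equiv σ)
  · intro u
    induction u using Quotient.ind with
    | _ t =>
      obtain ⟨ι, _, V', _, G', r', hc, ha, hiso⟩ := tree_decomp t.2.adj t.2.connected t.2.acyclic t.2.root
      have := Fintype.ofFinite ι
      choose s hs _ using fun i => exists_RT (G' i) (hc i) (ha i) (r' i)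
      obtain ⟨m, hm⟩ : ∃ m, Finset.univ.val.map (fun i => UT.mk (s i)) = m := ⟨_, rfl⟩
      refine ⟨m, ?_⟩
      rw [← fam_map m] at hm
      obtain ⟨σ, hσ⟩ := exists_equiv_of_map_univ_eq _ _ hm
      refine UT_mk_eq.2 ((graftRT_iso (fam m)).trans (RIso.trans (RIso.symm ?_) hiso))
      exact graft_congr σ fun i => (hs i).symm.trans (UT_mk_eq.1 (hσ i))

lemma uSize_graft (m : Multiset UT) : uSize (graftU m) = 1 + (m.map uSize).sum := by
  change (graftRT (fam m)).1 = _
  rw [graftRT_size]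
  conv_rhs => rw [← fam_map m]
  rw [Multiset.map_map]
  rfl

open Classical in
lemma uLeaves_graft (m : Multiset UT) :
    uLeaves (graftU m) = if m = 0 then 1 else (m.map uLeaves).sum := by
  change rtLeaves (graftRT (fam m)) = _
  rw [graftRT_leaves]
  have : Nat.card (Fin m.toList.length) = 0 ↔ m = 0 := by simp
  simp only [this]
  conv_rhs => rw [← fam_map m]
  rw [Multiset.map_map, fam_map]
  rfl

lemma uLeaves_le (u : UT) : uLeaves u ≤ uSize u := by
  induction u using Quotient.ind with
  | _ t =>
    change rtLeaves t ≤ t.1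
    have := Finite.card_subtype_le (leafP t.2.adj t.2.root)
    simpa [rtLeaves] using this

instance (n : ℕ) : Finite (RTree n) := by
  refine Finite.of_injective (fun t : RTree n => (t.adj, t.root)) ?_
  rintro ⟨a, _, _, b⟩ ⟨c, _, _, d⟩ h
  simp only [Prod.mk.injEq] at h
  obtain ⟨rfl, rfl⟩ := h
  rfl

lemma uSize_finite (N : ℕ) : {u : UT | uSize u ≤ N}.Finite := by
  have : (Set.range fun p : (Σ n : Fin (N + 1), RTree n) => 
    UT.mk (⟨p.1, p.2⟩ : RT)).Finite := Set.finite_range _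
  refine this.subset ?_
  intro u
  induction u using Quotient.ind with
  | _ t =>
    intro h
    have h : t.1 ≤ N := h
    exact ⟨⟨⟨t.1, by omega⟩, t.2⟩, rfl⟩

lemma aCount_eq (n k : ℕ) : aCount n k = Nat.card {u : UT // (uSize u, uLeaves u) = (n, k)} := by
  unfold aCount
  let F : {t : RTree n // numLeaves t = k} → {u : UT // (uSize u, uLeaves u) = (n, k)} :=
    fun t => ⟨UT.mk ⟨n, t.1⟩, by
      have : rtLeaves ⟨n, t.1⟩ = k := (rtLeaves_eq _).trans t.2
      exact Prod.ext rfl this⟩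
  refine Nat.card_congr (Equiv.ofBijective (Quotient.lift F ?_) ⟨?_, ?_⟩)
  · intro a b h
    exact Subtype.ext (UT_mk_eq.2 h)
  · intro a b
    induction a using Quotient.ind with | _ a =>
    induction b using Quotient.ind with | _ b =>
    intro h
    exact Quotient.sound (UT_mk_eq.1 (congrArg Subtype.val h))
  · rintro ⟨u, hu⟩
    induction u using Quotient.ind with
    | _ t =>
      obtain ⟨n', t⟩ := t
      rw [Prod.ext_iff] at hu
      have h1 : n' = n := hu.1
      subst h1
      have h2 : rtLeaves ⟨n', t⟩ = k := hu.2
      rw [rtLeaves_eq] at h2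
      exact ⟨Quotient.mk _ ⟨t, h2⟩, rfl⟩

lemma summable_iff (x z : ℝ) (hx : 0 < x) (hz : 0 < z) :
    Summable (fun p : ℕ × ℕ => (aCount p.1 p.2 : ℝ) * x ^ p.1 * z ^ p.2) ↔
    Summable (fun u : UT => x ^ uSize u * z ^ uLeaves u) := by
  have hf : ∀ p : ℕ × ℕ, Finite {u : UT // (uSize u, uLeaves u) = p} := by
    intro p
    refine ((uSize_finite p.1).subset ?_).to_subtype
    rintro u hu
    exact (congrArg Prod.fst hu).le
  rw [← (Equiv.sigmaFiberEquiv (fun u : UT => (uSize u, uLeaves u))).summable_iff,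
    summable_sigma_of_nonneg (fun _ => by simp only [Function.comp]; positivity)]
  rw [iff_comm]
  constructor
  · rintro ⟨-, h⟩
    refine h.congr fun p => ?_
    have h1 : ∀ y : {u : UT // (uSize u, uLeaves u) = p}, 
      ((fun u : UT => x ^ uSize u * z ^ uLeaves u) ∘ (Equiv.sigmaFiberEquiv (fun u : UT => (uSize u, uLeaves u)))) ⟨p, y⟩ = x ^ p.1 * z ^ p.2 := by
      rintro ⟨u, rfl⟩; rfl
    simp only [h1]
    rw [aCount_eq, tsum_const, nsmul_eq_mul, mul_assoc]
  · intro h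
    refine ⟨fun p => ?_, ?_⟩
    · have := hf p
      have := Fintype.ofFinite {u : UT // (uSize u, uLeaves u) = p}
      exact (hasSum_fintype _).summable
    · refine h.congr fun p => ?_
      have h1 : ∀ y : {u : UT // (uSize u, uLeaves u) = p}, 
        ((fun u : UT => x ^ uSize u * z ^ uLeaves u) ∘ (Equiv.sigmaFiberEquiv (fun u : UT => (uSize u, uLeaves u)))) ⟨p, y⟩ = x ^ p.1 * z ^ p.2 := by
        rintro ⟨u, rfl⟩; rfl
      simp only [h1]
      rw [aCount_eq, tsum_const, nsmul_eq_mul, mul_assoc]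

/-! ### Analysis -/

lemma hasSum_multiset_prod {U : Type} (w : U → ℝ) (s : Finset U) (h0 : ∀ u, 0 ≤ w u)
    (h1 : ∀ u, w u < 1) :
    HasSum (fun m : {m : Multiset U // ∀ u ∈ m, u ∈ s} => (m.1.map w).prod)
      (∏ u ∈ s, (1 - w u)⁻¹) := by
  classical
  induction s using Finset.induction_on with
  | empty =>
    have : Unique {m : Multiset U // ∀ u ∈ m, u ∈ (∅ : Finset U)} :=
      { default := ⟨0, by simp⟩
        uniq := by
          rintro ⟨m, hm⟩
          apply Subtype.ext
          exact Multiset.eq_zero_of_forall_notMem fun u hu => by simpa using hm u hu }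
    have h := hasSum_unique (fun m : {m : Multiset U // ∀ u ∈ m, u ∈ (∅ : Finset U)} => (m.1.map w).prod)
    have hd : (default : {m : Multiset U // ∀ u ∈ m, u ∈ (∅ : Finset U)}).1 = 0 :=
      Multiset.eq_zero_of_forall_notMem fun u hu => by
        simpa using (default : {m : Multiset U // ∀ u ∈ m, u ∈ (∅ : Finset U)}).2 u hu
    rw [hd] at h
    simpa using h
  | insert a s ha ih =>
    have hg := hasSum_geometric_of_lt_one (h0 a) (h1 a)
    have hmul := hg.mul ih (hg.summable.mul_of_nonneg ih.summable
      (fun k => pow_nonneg (h0 a) k)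
      (fun m => Multiset.prod_nonneg (by
        intro x hx
        obtain ⟨u, _, rfl⟩ := Multiset.mem_map.1 hx
        exact h0 u)))
    let F : ℕ × {m : Multiset U // ∀ u ∈ m, u ∈ s} → {m : Multiset U // ∀ u ∈ m, u ∈ insert a s} :=
      fun p => ⟨Multiset.replicate p.1 a + p.2.1, by
        intro u hu
        rw [Multiset.mem_add] at hu
        rcases hu with hu | hu
        · rw [Multiset.eq_of_mem_replicate hu]; exact Finset.mem_insert_self _ _
        · exact Finset.mem_insert_of_mem (p.2.2 u hu)⟩
    have hF : Function.Bijective F := by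
      constructor
      · rintro ⟨k, m, hm⟩ ⟨k', m', hm'⟩ h
        have h := congrArg Subtype.val h
        change Multiset.replicate k a + m = Multiset.replicate k' a + m' at h
        have hc : Multiset.count a m = 0 := Multiset.count_eq_zero.2 fun h => ha (hm a h)
        have hc' : Multiset.count a m' = 0 := Multiset.count_eq_zero.2 fun h => ha (hm' a h)
        have hk := congrArg (Multiset.count a) h
        simp only [Multiset.count_add, Multiset.count_replicate_self, hc, hc', add_zero] at hk
        subst hk
        have := add_left_cancel h
        subst this
        rfl
      · rintro ⟨m, hm⟩
        refine ⟨⟨Multiset.count a m, m.filter (fun u => ¬ u = a), ?_⟩, ?_⟩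
        · intro u hu
          rw [Multiset.mem_filter] at hu
          exact (Finset.mem_insert.1 (hm u hu.1)).resolve_left hu.2
        · apply Subtype.ext
          change Multiset.replicate (Multiset.count a m) a + m.filter (fun u => ¬ u = a) = m
          rw [← Multiset.filter_eq' m a]
          exact Multiset.filter_add_not _ _
    rw [Finset.prod_insert ha, ← (Equiv.ofBijective F hF).hasSum_iff]
    refine hmul.congr_fun ?_
    intro p
    simp [F]

structure TreeSys (U : Type) where
  n : U → ℕ
  l : U → ℕ
  Φ : Multiset U → U
  bij : Function.Bijective Φ
  hn : ∀ m, n (Φ m) = 1 + (m.map n).sum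
  hl0 : l (Φ 0) = 1
  hl : ∀ m, m ≠ 0 → l (Φ m) = (m.map l).sum
  hle : ∀ u, l u ≤ n u
  hfin : ∀ N, {u | n u ≤ N}.Finite

namespace TreeSys

variable {U : Type} (S : TreeSys U)

noncomputable def w (a b : ℝ) (u : U) : ℝ := Real.exp (S.n u * a + S.l u * b)

lemma n_pos (u : U) : 1 ≤ S.n u := by
  obtain ⟨m, rfl⟩ := S.bij.2 u
  rw [S.hn]; omega

lemma w_pos (a b : ℝ) (u : U) : 0 < S.w a b u := Real.exp_pos _

lemma prod_w (a b : ℝ) (m : Multiset U) :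
    (m.map (S.w a b)).prod = Real.exp ((m.map S.n).sum * a + (m.map S.l).sum * b) := by
  induction m using Multiset.induction_on with
  | empty => simp
  | cons u m ih =>
    simp only [Multiset.map_cons, Multiset.prod_cons, Multiset.sum_cons, ih, w, ← Real.exp_add]
    push_cast
    ring_nf

lemma w_Φ (a b : ℝ) (m : Multiset U) (hm : m ≠ 0) :
    S.w a b (S.Φ m) = Real.exp a * (m.map (S.w a b)).prod := by
  rw [prod_w, w, S.hn, S.hl m hm, ← Real.exp_add]
  push_cast
  ring_nf

lemma w_Φ0 (a b : ℝ) : S.w a b (S.Φ 0) = Real.exp (a + b) := by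
  rw [w, S.hn, S.hl0]
  simp

lemma neg_of_summable {a b : ℝ} (h : Summable (S.w a b)) : a < 0 ∧ a + b < 0 := by
  constructor
  · let p : ℕ → U := fun k => Nat.rec (S.Φ 0) (fun _ u => S.Φ {u}) k
    have hp : ∀ k, p (k + 1) = S.Φ {p k} := fun k => rfl
    have hn : ∀ k, S.n (p k) = k + 1 := by
      intro k
      induction k with
      | zero => change S.n (S.Φ 0) = _; rw [S.hn]; simp
      | succ k ih => rw [hp, S.hn]; simp [ih]; omega
    have hl : ∀ k, S.l (p k) = 1 := by
      intro k
      induction k with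
      | zero => exact S.hl0
      | succ k ih => rw [hp, S.hl _ (by simp)]; simp [ih]
    have hinj : Function.Injective p := by
      intro i j hij
      have := congrArg S.n hij
      rw [hn, hn] at this
      omega
    have h1 := (h.comp_injective hinj).tendsto_atTop_zero
    by_contra ha
    push Not at ha
    have h2 : ∀ k, Real.exp b ≤ (S.w a b ∘ p) k := by
      intro k
      simp only [Function.comp, w, hn, hl]
      apply Real.exp_le_exp.2
      push_cast
      nlinarith [mul_nonneg (show (0:ℝ) ≤ k + 1 by positivity) ha]
    have := ge_of_tendsto' h1 h2
    exact absurd this (not_le.2 (Real.exp_pos b))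
  · let p : ℕ → U := fun k => S.Φ (Multiset.replicate (k + 1) (S.Φ 0))
    have hn0 : S.n (S.Φ 0) = 1 := by rw [S.hn]; simp
    have hn : ∀ k, S.n (p k) = k + 2 := by
      intro k
      simp only [p]
      rw [S.hn]; simp [hn0]; omega
    have hl : ∀ k, S.l (p k) = k + 1 := by
      intro k
      simp only [p]
      rw [S.hl _ (by simp [Multiset.replicate_succ])]; simp [S.hl0]; omega
    have hinj : Function.Injective p := by
      intro i j hij
      have := congrArg S.n hij
      rw [hn, hn] at this
      omega
    have h1 := (h.comp_injective hinj).tendsto_atTop_zero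
    by_contra ha
    push Not at ha
    have h2 : ∀ k, Real.exp a ≤ (S.w a b ∘ p) k := by
      intro k
      simp only [Function.comp, w, hn, hl]
      apply Real.exp_le_exp.2
      push_cast
      nlinarith [mul_nonneg (show (0:ℝ) ≤ k + 1 by positivity) ha]
    have := ge_of_tendsto' h1 h2
    exact absurd this (not_le.2 (Real.exp_pos a))

lemma expo_le {a b μ : ℝ} (ha : a ≤ μ) (hb : a + b ≤ μ) (u : U) :
    S.n u * a + S.l u * b ≤ S.n u * μ := by
  have h : (S.l u : ℝ) ≤ S.n u := by exact_mod_cast S.hle u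
  have h0 : (0 : ℝ) ≤ S.l u := by positivity
  nlinarith [mul_nonneg (sub_nonneg.2 h) (sub_nonneg.2 ha), mul_nonneg h0 (sub_nonneg.2 hb)]

lemma w_le {a b μ : ℝ} (ha : a ≤ μ) (hb : a + b ≤ μ) (hμ : μ ≤ 0) (u : U) :
    S.w a b u ≤ Real.exp μ := by
  refine Real.exp_le_exp.2 ((S.expo_le ha hb u).trans ?_)
  have h : (1 : ℝ) ≤ S.n u := by exact_mod_cast S.n_pos u
  nlinarith

lemma w_lt_one {a b : ℝ} (ha : a < 0) (hb : a + b < 0) (u : U) : S.w a b u < 1 := by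
  refine (S.w_le (le_max_left a (a + b)) (le_max_right a (a + b)) (max_lt ha hb).le u).trans_lt ?_
  rw [Real.exp_lt_one_iff]
  exact max_lt ha hb

end TreeSys

noncomputable def ff (x : ℝ) : ℝ := -Real.log (1 - x) - x

lemma ff_nonneg {x : ℝ} (h1 : x < 1) : 0 ≤ ff x := by
  have := Real.log_le_sub_one_of_pos (show 0 < 1 - x by linarith)
  unfold ff; linarith

lemma ff_le {x q : ℝ} (h0 : 0 ≤ x) (hx : x ≤ q) (hq : q < 1) : ff x ≤ x * (q / (1 - q)) := by
  have h1 : 0 < 1 - x := by linarith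
  have h2 : 0 < 1 - q := by linarith
  have := Real.log_le_sub_one_of_pos (inv_pos.2 h1)
  rw [Real.log_inv] at this
  have h3 : (1 - x)⁻¹ - 1 - x = x * (x / (1 - x)) := by field_simp; ring
  have h4 : x / (1 - x) ≤ q / (1 - q) := by
    rw [div_le_div_iff₀ h1 h2]; nlinarith
  unfold ff
  calc _ ≤ (1 - x)⁻¹ - 1 - x := by linarith
    _ = _ := h3
    _ ≤ _ := mul_le_mul_of_nonneg_left h4 h0

namespace TreeSys

variable {U : Type} (S : TreeSys U)

lemma prod_eq_exp {w : U → ℝ} (h1 : ∀ u, w u < 1) (s : Finset U) :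
    ∏ u ∈ s, (1 - w u)⁻¹ = Real.exp (∑ u ∈ s, w u + ∑ u ∈ s, ff (w u)) := by
  rw [← Finset.sum_add_distrib, Real.exp_sum]
  refine Finset.prod_congr rfl fun u _ => ?_
  have : 0 < 1 - w u := by linarith [h1 u]
  unfold ff
  rw [show w u + (-Real.log (1 - w u) - w u) = -Real.log (1 - w u) by ring, Real.exp_neg,
    Real.exp_log this]

/-- finite-set sums of multisets bounded by the product -/
lemma sum_prod_le {w : U → ℝ} (h0 : ∀ u, 0 ≤ w u) (h1 : ∀ u, w u < 1) (s : Finset U)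
    (F : Finset (Multiset U)) (hF : ∀ m ∈ F, ∀ u ∈ m, u ∈ s) :
    ∑ m ∈ F, (m.map w).prod ≤ Real.exp (∑ u ∈ s, w u + ∑ u ∈ s, ff (w u)) := by
  classical
  rw [← prod_eq_exp h1]
  have h := hasSum_multiset_prod w s h0 h1
  have h2 := sum_le_hasSum (F.subtype (fun m => ∀ u ∈ m, u ∈ s)) (fun m _ => 
    Multiset.prod_nonneg (by
        intro x hx
        obtain ⟨u, _, rfl⟩ := Multiset.mem_map.1 hx
        exact h0 u)) h
  refine le_trans (le_of_eq ?_) h2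
  rw [Finset.sum_subtype_of_mem (fun m => (Multiset.map w m).prod) hF]

lemma summable_ff {a b : ℝ} (h : Summable (S.w a b)) : Summable (fun u => ff (S.w a b u)) := by
  obtain ⟨ha, hb⟩ := S.neg_of_summable h
  have hq : Real.exp (max a (a + b)) < 1 := by
    rw [Real.exp_lt_one_iff]; exact max_lt ha hb
  refine Summable.of_nonneg_of_le (fun u => ff_nonneg (S.w_lt_one ha hb u))
    (fun u => ff_le (S.w_pos a b u).le (S.w_le (le_max_left _ _) (le_max_right _ _) 
      (max_lt ha hb).le u) hq) (h.mul_right _)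

noncomputable def H (a b : ℝ) : ℝ := ∑' u, ff (S.w a b u)
noncomputable def TT (a b : ℝ) : ℝ := ∑' u, S.w a b u

lemma functional {a b : ℝ} (h : Summable (S.w a b)) :
    S.TT a b = Real.exp a * Real.exp (S.TT a b + S.H a b) + (Real.exp (a + b) - Real.exp a) := by
  classical
  obtain ⟨ha, hb⟩ := S.neg_of_summable h
  have hf := S.summable_ff h
  have hlt := S.w_lt_one ha hb
  have hpos := fun u => (S.w_pos a b u).le
  let E := Equiv.ofBijective S.Φ S.bij
  have hE : HasSum (fun m => S.w a b (S.Φ m)) (S.TT a b) := E.hasSum_iff.2 h.hasSum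
  have hW : HasSum (fun m : Multiset U => Real.exp a * (m.map (S.w a b)).prod)
      (S.TT a b - (Real.exp (a + b) - Real.exp a)) := by
    have h1 := hasSum_ite_eq (0 : Multiset U) (Real.exp (a + b) - Real.exp a)
    refine (hE.sub h1).congr_fun ?_
    intro m
    split_ifs with hm
    · subst hm; rw [w_Φ0]; simp
    · rw [w_Φ _ _ _ _ hm]; ring
  have hM : HasSum (fun m : Multiset U => (m.map (S.w a b)).prod)
      ((S.TT a b - (Real.exp (a + b) - Real.exp a)) / Real.exp a) := by
    have := hW.div_const (Real.exp a)
    refine this.congr_fun ?_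
    intro m
    field_simp
  have h0 : ∀ m : Multiset U, 0 ≤ (m.map (S.w a b)).prod := by
    intro m; rw [prod_w]; positivity
  have hle : (S.TT a b - (Real.exp (a + b) - Real.exp a)) / Real.exp a ≤
      Real.exp (S.TT a b + S.H a b) := by
    refine hasSum_le_of_sum_le hM fun F => ?_
    refine (sum_prod_le hpos hlt (F.biUnion fun m => m.toFinset) F ?_).trans ?_
    · intro m hm u hu
      exact Finset.mem_biUnion.2 ⟨m, hm, Multiset.mem_toFinset.2 hu⟩
    · apply Real.exp_le_exp.2
      exact add_le_add (h.sum_le_tsum _ fun u _ => hpos u)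
        (hf.sum_le_tsum _ fun u _ => ff_nonneg (hlt u))
  have hge : Real.exp (S.TT a b + S.H a b) ≤ 
      (S.TT a b - (Real.exp (a + b) - Real.exp a)) / Real.exp a := by
    have ht := (Real.continuous_exp.tendsto _).comp (h.hasSum.add hf.hasSum)
    refine le_of_tendsto' ht fun s => ?_
    simp only [Function.comp]
    rw [Finset.sum_add_distrib, ← prod_eq_exp hlt]
    have h1 := hasSum_multiset_prod (S.w a b) s hpos hlt
    refine hasSum_le_inj (Subtype.val) Subtype.val_injective (fun m _ => h0 m) (fun m => le_rfl) h1 hM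
  have := le_antisymm hle hge
  rw [div_eq_iff (Real.exp_pos a).ne'] at this
  linarith

lemma super {a b C B : ℝ} (ha : a < 0) (hb : a + b < 0) (hC : 0 ≤ C)
    (hB : ∀ s : Finset U, ∑ u ∈ s, S.w a b u ≤ C → 
      ∑ u ∈ s, S.w a b u + ∑ u ∈ s, ff (S.w a b u) ≤ B)
    (hCB : Real.exp a * Real.exp B + (Real.exp (a + b) - Real.exp a) ≤ C) :
    Summable (S.w a b) := by
  classical
  have hlt := S.w_lt_one ha hb
  have hpos := fun u => (S.w_pos a b u).le
  have key : ∀ N, ∑ u ∈ (S.hfin N).toFinset, S.w a b u ≤ C := by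
    intro N
    induction N with
    | zero =>
      have : (S.hfin 0).toFinset = ∅ := by
        ext u
        have := S.n_pos u
        simp; omega
      rw [this]; simpa using hC
    | succ N ih =>
      let E := Equiv.ofBijective S.Φ S.bij
      let F := (S.hfin (N + 1)).toFinset.map E.symm.toEmbedding
      have hmem : ∀ m, m ∈ F ↔ S.n (S.Φ m) ≤ N + 1 := by
        intro m
        simp only [F, Finset.mem_map_equiv, Equiv.symm_symm, Set.Finite.mem_toFinset]
        rfl
      have hF : ∀ m ∈ F, ∀ u ∈ m, u ∈ (S.hfin N).toFinset := by
        intro m hm u hu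
        rw [hmem, S.hn] at hm
        have : S.n u ≤ (m.map S.n).sum := Multiset.single_le_sum (fun _ _ => Nat.zero_le _) _ 
          (Multiset.mem_map_of_mem _ hu)
        simp; omega
      have h0 : (0 : Multiset U) ∈ F := by rw [hmem, S.hn]; simp
      have h1 : ∑ u ∈ (S.hfin (N + 1)).toFinset, S.w a b u = ∑ m ∈ F, S.w a b (S.Φ m) := by
        simp only [F, Finset.sum_map]
        refine Finset.sum_congr rfl fun u _ => ?_
        congr 1
        exact (E.apply_symm_apply u).symm
      have h2 : ∑ m ∈ F, S.w a b (S.Φ m) = 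
         Real.exp a * ∑ m ∈ F, (m.map (S.w a b)).prod + (Real.exp (a + b) - Real.exp a) := by
        have : ∀ m ∈ F, S.w a b (S.Φ m) = Real.exp a * (m.map (S.w a b)).prod + 
          (if m = 0 then (Real.exp (a + b) - Real.exp a) else 0) := by
          intro m _
          split_ifs with hm
          · subst hm; rw [w_Φ0]; simp
          · rw [w_Φ _ _ _ _ hm]; ring
        rw [Finset.sum_congr rfl this, Finset.sum_add_distrib, ← Finset.mul_sum,
          Finset.sum_ite_eq' F 0, if_pos h0]
      rw [h1, h2]
      refine le_trans ?_ hCB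
      gcongr
      exact (sum_prod_le hpos hlt _ F hF).trans (Real.exp_le_exp.2 (hB _ ih))
  refine summable_of_sum_le hpos (c := C) fun s => ?_
  refine le_trans (Finset.sum_le_sum_of_subset_of_nonneg ?_ fun u _ _ => hpos u) (key (s.sup S.n))
  intro u hu
  simpa using Finset.le_sup (f := S.n) hu

noncomputable def g (a b : ℝ) : ℝ := a + 1 + Real.exp (a + b) - Real.exp a + S.H a b

lemma summable_of_g {a b : ℝ} (ha : a < 0) (hb : a + b < 0)
    (hf : Summable (fun u => ff (S.w a b u))) (hg : S.g a b ≤ 0) : Summable (S.w a b) := by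
  have hea : Real.exp a < 1 := Real.exp_lt_one_iff.2 ha
  refine S.super (C := 1 + Real.exp (a + b) - Real.exp a)
    (B := 1 + Real.exp (a + b) - Real.exp a + S.H a b) ha hb ?_ ?_ ?_
  · linarith [Real.exp_pos (a + b)]
  · intro s hs
    exact add_le_add hs (hf.sum_le_tsum _ fun u _ => ff_nonneg (S.w_lt_one ha hb u))
  · rw [← Real.exp_add]
    have : a + (1 + Real.exp (a + b) - Real.exp a + S.H a b) = S.g a b := by unfold g; ring
    rw [this]
    linarith [Real.exp_le_one_iff.2 hg]

/-- `y = T - x(z-1)` satisfies `y = A e^y`. -/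
lemma g_le_of_summable {a b : ℝ} (h : Summable (S.w a b)) : S.g a b ≤ 0 ∧
    (S.g a b = 0 → S.TT a b = 1 + Real.exp (a + b) - Real.exp a) := by
  have hF := S.functional h
  rw [← Real.exp_add] at hF
  obtain ⟨y, hy⟩ : ∃ y, y = S.TT a b - (Real.exp (a + b) - Real.exp a) := ⟨_, rfl⟩
  have e1 : a + (S.TT a b + S.H a b) = S.g a b + (y - 1) := by rw [hy]; unfold g; ring
  rw [e1] at hF
  have hy' : y = Real.exp (S.g a b + (y - 1)) := by rw [hy]; rw [hy] at hF; linarith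
  have hpos : 0 < y := by rw [hy']; positivity
  have hlog : Real.log y = S.g a b + (y - 1) := by
    conv_lhs => rw [hy']
    exact Real.log_exp _
  have := Real.log_le_sub_one_of_pos hpos
  refine ⟨by linarith, fun h0 => ?_⟩
  by_contra hne
  have hy1 : y ≠ 1 := by intro h1; apply hne; linarith
  have := Real.log_lt_sub_one_of_pos hpos hy1
  linarith

lemma TT_bound {a b a1 : ℝ} (h : Summable (S.w a b)) (h1 : a1 ≤ a) :
    S.TT a b ≤ 2 * Real.exp (1 - a1) + 1 := by
  obtain ⟨ha, hb⟩ := S.neg_of_summable h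
  have hF := S.functional h
  have hH : 0 ≤ S.H a b := tsum_nonneg fun u => ff_nonneg (S.w_lt_one ha hb u)
  have hea : Real.exp a < 1 := Real.exp_lt_one_iff.2 ha
  have heb : Real.exp (a + b) < 1 := Real.exp_lt_one_iff.2 hb
  obtain ⟨y, hy⟩ : ∃ y, y = S.TT a b - (Real.exp (a + b) - Real.exp a) := ⟨_, rfl⟩
  have hy' : y = Real.exp (a + (S.TT a b + S.H a b)) := by rw [Real.exp_add]; linarith
  have hpos : 0 < y := by rw [hy']; positivity
  have h2 : Real.exp (a1 - 1) * Real.exp y ≤ y := by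
    rw [← Real.exp_add]
    conv_rhs => rw [hy']
    apply Real.exp_le_exp.2
    linarith [Real.exp_pos (a + b)]
  have h3 := Real.quadratic_le_exp_of_nonneg hpos.le
  have h4 : Real.exp (a1 - 1) * (y ^ 2 / 2) ≤ y := by
    refine le_trans ?_ h2
    gcongr
    linarith
  have h5 : Real.exp (a1 - 1) * y ≤ 2 := by
    by_contra hc
    push Not at hc
    nlinarith
  have h6 : y ≤ 2 * Real.exp (1 - a1) := by
    have : Real.exp (1 - a1) * Real.exp (a1 - 1) = 1 := by rw [← Real.exp_add]; simp
    nlinarith [Real.exp_pos (1 - a1)]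
  linarith [Real.exp_pos a]

lemma summable_small (b : ℝ) : Summable (S.w (-(|b| + 5)) b) := by
  have hb := le_abs_self b
  have hb' := abs_nonneg b
  have e1 : Real.exp (-1) ≤ 1 / 2 := by
    rw [Real.exp_neg]
    have := Real.add_one_le_exp 1
    rw [inv_le_comm₀ (Real.exp_pos _) (by norm_num)]
    norm_num; linarith
  have e3 : Real.exp (-(|b| + 5)) * Real.exp 2 ≤ 1 / 2 := by
    rw [← Real.exp_add]
    exact (Real.exp_le_exp.2 (by linarith)).trans e1
  have e4 : Real.exp (-(|b| + 5) + b) ≤ 1 / 2 := (Real.exp_le_exp.2 (by linarith)).trans e1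
  have hw : ∀ u, S.w (-(|b| + 5)) b u ≤ 1 / 2 := fun u =>
    (S.w_le (μ := -1) (by linarith) (by linarith) (by norm_num) u).trans e1
  refine S.super (C := 1) (B := 2) (by linarith) (by linarith) zero_le_one ?_ ?_
  · intro s hs
    have : ∑ u ∈ s, ff (S.w (-(|b| + 5)) b u) ≤ ∑ u ∈ s, S.w (-(|b| + 5)) b u := by
      refine Finset.sum_le_sum fun u _ => ?_
      have := ff_le (S.w_pos (-(|b| + 5)) b u).le (hw u) (by norm_num)
      rw [show (1 / 2 / (1 - 1 / 2) : ℝ) = 1 by norm_num, mul_one] at this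
      exact this
    linarith
  · linarith [Real.exp_pos (-(|b| + 5))]

end TreeSys

namespace TreeSys

variable {U : Type} (S : TreeSys U)

noncomputable def dlin (u : U) : ℝ × ℝ →L[ℝ] ℝ :=
  (S.n u : ℝ) • ContinuousLinearMap.fst ℝ ℝ ℝ + (S.l u : ℝ) • ContinuousLinearMap.snd ℝ ℝ ℝ

lemma dlin_norm (u : U) : ‖S.dlin u‖ ≤ 2 * S.n u := by
  have h : (S.l u : ℝ) ≤ S.n u := by exact_mod_cast S.hle u
  refine (norm_add_le _ _).trans ?_
  rw [norm_smul, norm_smul, Real.norm_natCast, Real.norm_natCast]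
  have h1 := ContinuousLinearMap.norm_fst_le ℝ ℝ ℝ
  have h2 := ContinuousLinearMap.norm_snd_le ℝ ℝ ℝ
  have h3 : (0 : ℝ) ≤ S.n u := by positivity
  have h4 : (0 : ℝ) ≤ S.l u := by positivity
  nlinarith

noncomputable def dH (u : U) (p : ℝ × ℝ) : ℝ × ℝ →L[ℝ] ℝ :=
  (((1 - S.w p.1 p.2 u)⁻¹ - 1) * S.w p.1 p.2 u) • S.dlin u

lemma hasFDerivAt_ff (u : U) (p : ℝ × ℝ) (h : S.w p.1 p.2 u < 1) :
    HasFDerivAt (fun p : ℝ × ℝ => ff (S.w p.1 p.2 u)) (S.dH u p) p := by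
  have h1 : HasFDerivAt (fun p : ℝ × ℝ => (S.n u : ℝ) * p.1 + S.l u * p.2) (S.dlin u) p :=
    (S.dlin u).hasFDerivAt
  have h2 : HasFDerivAt (fun p : ℝ × ℝ => S.w p.1 p.2 u) (S.w p.1 p.2 u • S.dlin u) p := h1.exp
  have h3 : HasDerivAt ff ((1 - S.w p.1 p.2 u)⁻¹ - 1) (S.w p.1 p.2 u) := by
    have h4 : HasDerivAt (fun x : ℝ => 1 - x) (-1) (S.w p.1 p.2 u) := by
      simpa using (hasDerivAt_id (S.w p.1 p.2 u)).const_sub 1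
    have h5 := ((h4.log (by linarith)).neg).sub (hasDerivAt_id (S.w p.1 p.2 u))
    refine h5.congr_deriv ?_
    rw [neg_div, neg_neg, one_div]
  have h6 := h3.comp_hasFDerivAt p h2
  refine h6.congr_fderiv ?_
  unfold dH
  rw [smul_smul]

lemma dH_nonneg (u : U) (p : ℝ × ℝ) (h : S.w p.1 p.2 u < 1) : 0 ≤ S.dH u p (1, 0) := by
  have h0 := S.w_pos p.1 p.2 u
  have : 1 ≤ (1 - S.w p.1 p.2 u)⁻¹ := by
    rw [one_le_inv₀ (by linarith)]; linarith
  have h2 : S.dH u p (1, 0) = (((1 - S.w p.1 p.2 u)⁻¹ - 1) * S.w p.1 p.2 u) * S.n u := by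
    simp [dH, dlin]
  rw [h2]
  have := sub_nonneg.2 this
  positivity

lemma H_deriv {a b : ℝ} (h : Summable (S.w a b)) :
    ∃ L : ℝ × ℝ →L[ℝ] ℝ, HasFDerivAt (fun p : ℝ × ℝ => S.H p.1 p.2) L (a, b) ∧ 0 ≤ L (1, 0) ∧
      ∃ δ > 0, ∀ p ∈ Metric.ball ((a, b) : ℝ × ℝ) δ, Summable (fun u => ff (S.w p.1 p.2 u)) := by
  obtain ⟨ha, hb⟩ := S.neg_of_summable h
  obtain ⟨c, hc, hac, hbc⟩ : ∃ c : ℝ, 0 < c ∧ a ≤ -c ∧ a + b ≤ -c :=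
    ⟨-max a (a + b), by linarith [max_lt ha hb], by linarith [le_max_left a (a + b)],
      by linarith [le_max_right a (a + b)]⟩
  obtain ⟨q, hq⟩ : ∃ q, q = Real.exp (-(3 * c / 4)) := ⟨_, rfl⟩
  have hq1 : q < 1 := by rw [hq, Real.exp_lt_one_iff]; linarith
  have hexp : ∀ p ∈ Metric.ball ((a, b) : ℝ × ℝ) (c / 8), ∀ u,
      S.n u * p.1 + S.l u * p.2 ≤ S.n u * a + S.l u * b + S.n u * (c / 4) := by
    intro p hp u
    rw [Metric.mem_ball, Prod.dist_eq, max_lt_iff, Real.dist_eq, Real.dist_eq] at hp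
    have h1 := (abs_lt.1 hp.1).2
    have h2 := (abs_lt.1 hp.2).2
    simp only at h1 h2
    have h : (S.l u : ℝ) ≤ S.n u := by exact_mod_cast S.hle u
    have h3 : (0 : ℝ) ≤ S.n u := by positivity
    have h4 : (0 : ℝ) ≤ S.l u := by positivity
    nlinarith [mul_nonneg h3 (sub_nonneg.2 h1.le), mul_nonneg h4 (sub_nonneg.2 h2.le)]
  have hwq : ∀ p ∈ Metric.ball ((a, b) : ℝ × ℝ) (c / 8), ∀ u, S.w p.1 p.2 u ≤ q := by
    intro p hp u
    rw [hq]
    refine Real.exp_le_exp.2 ((hexp p hp u).trans ?_)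
    have h1 := S.expo_le hac hbc u
    have h : (1 : ℝ) ≤ S.n u := by exact_mod_cast S.n_pos u
    nlinarith
  have hw2 : ∀ p ∈ Metric.ball ((a, b) : ℝ × ℝ) (c / 8), ∀ u,
      S.w p.1 p.2 u * S.w p.1 p.2 u * S.n u ≤ S.w a b u * (2 / c) := by
    intro p hp u
    have h1 := S.expo_le hac hbc u
    have h2 := hexp p hp u
    have h3 : S.w p.1 p.2 u * S.w p.1 p.2 u ≤ S.w a b u * Real.exp (-(S.n u * c / 2)) := by
      unfold w
      rw [← Real.exp_add, ← Real.exp_add]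
      apply Real.exp_le_exp.2
      linarith
    have h4 : Real.exp (-(S.n u * c / 2)) * S.n u ≤ 2 / c := by
      have h5 := Real.add_one_le_exp (S.n u * c / 2)
      rw [Real.exp_neg, inv_mul_le_iff₀ (Real.exp_pos _)]
      have : Real.exp (S.n u * c / 2) * (2 / c) ≥ (S.n u * c / 2) * (2 / c) := by
        gcongr; linarith
      have e : (S.n u * c / 2) * (2 / c) = S.n u := by field_simp
      linarith
    calc _ ≤ S.w a b u * Real.exp (-(S.n u * c / 2)) * S.n u := by gcongr
      _ = S.w a b u * (Real.exp (-(S.n u * c / 2)) * S.n u) := by ring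
      _ ≤ _ := by gcongr; exact (S.w_pos a b u).le
  have hd : ∀ u, ∀ p ∈ Metric.ball ((a, b) : ℝ × ℝ) (c / 8), 
      ‖S.dH u p‖ ≤ S.w a b u * (2 / c) * (2 / (1 - q)) := by
    intro u p hp
    have hle := hwq p hp u
    have h0 := S.w_pos p.1 p.2 u
    have hlt : 0 < 1 - S.w p.1 p.2 u := by linarith
    have e1 : ((1 - S.w p.1 p.2 u)⁻¹ - 1) * S.w p.1 p.2 u = 
      S.w p.1 p.2 u * S.w p.1 p.2 u * (1 - S.w p.1 p.2 u)⁻¹ := by field_simp; ring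
    have e2 : (1 - S.w p.1 p.2 u)⁻¹ ≤ (1 - q)⁻¹ := by
      apply inv_anti₀ <;> linarith
    unfold dH
    rw [norm_smul, e1, Real.norm_of_nonneg (by positivity)]
    have hq2 : 0 < 1 - q := by linarith
    calc _ ≤ S.w p.1 p.2 u * S.w p.1 p.2 u * (1 - q)⁻¹ * (2 * S.n u) := by
          gcongr; exact S.dlin_norm u
      _ = S.w p.1 p.2 u * S.w p.1 p.2 u * S.n u * (2 / (1 - q)) := by rw [div_eq_mul_inv]; ring
      _ ≤ _ := mul_le_mul_of_nonneg_right (hw2 p hp u) (by positivity)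
  have hsum : Summable (fun u => S.w a b u * (2 / c) * (2 / (1 - q))) := (h.mul_right _).mul_right _
  have hder : ∀ u, ∀ p ∈ Metric.ball ((a, b) : ℝ × ℝ) (c / 8),
      HasFDerivAt (fun p : ℝ × ℝ => ff (S.w p.1 p.2 u)) (S.dH u p) p :=
    fun u p hp => S.hasFDerivAt_ff u p ((hwq p hp u).trans_lt hq1)
  have hpre : IsPreconnected (Metric.ball ((a, b) : ℝ × ℝ) (c / 8)) :=
    (convex_ball _ _).isPreconnected
  have hmem : ((a, b) : ℝ × ℝ) ∈ Metric.ball ((a, b) : ℝ × ℝ) (c / 8) :=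
    Metric.mem_ball_self (by positivity)
  refine ⟨∑' u, S.dH u (a, b), ?_, ?_, c / 8, by positivity, ?_⟩
  · have hf0 : Summable (fun u => ff (S.w ((a, b) : ℝ × ℝ).1 ((a, b) : ℝ × ℝ).2 u)) := S.summable_ff h
    exact hasFDerivAt_tsum_of_isPreconnected (f := fun u (p : ℝ × ℝ) => ff (S.w p.1 p.2 u))
      hsum Metric.isOpen_ball hpre hder hd hmem hf0 hmem
  · have hs : Summable (fun u => S.dH u (a, b)) := Summable.of_norm_bounded hsum fun u => hd u _ hmem
    have h1 := hs.hasSum.mapL (ContinuousLinearMap.apply ℝ ℝ ((1, 0) : ℝ × ℝ))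
    have h2 : ∀ u, 0 ≤ S.dH u (a, b) (1, 0) := fun u =>
      S.dH_nonneg u (a, b) (lt_of_le_of_lt (hwq (a, b) hmem u) hq1)
    exact h1.nonneg h2
  · intro p hp
    have hf0 : Summable (fun u => ff (S.w ((a, b) : ℝ × ℝ).1 ((a, b) : ℝ × ℝ).2 u)) := S.summable_ff h
    exact summable_of_summable_hasFDerivAt_of_isPreconnected
      (f := fun u (p : ℝ × ℝ) => ff (S.w p.1 p.2 u))
      hsum Metric.isOpen_ball hpre hder hd hmem hf0 hp

lemma g_deriv {a b : ℝ} (h : Summable (S.w a b)) :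
    ∃ L : ℝ × ℝ →L[ℝ] ℝ, HasFDerivAt (fun p : ℝ × ℝ => S.g p.1 p.2) L (a, b) ∧ 0 < L (1, 0) := by
  obtain ⟨ha, hb⟩ := S.neg_of_summable h
  obtain ⟨L, hL, hL0, -⟩ := S.H_deriv h
  have hf : HasFDerivAt (fun p : ℝ × ℝ => p.1) (ContinuousLinearMap.fst ℝ ℝ ℝ) (a, b) := hasFDerivAt_fst
  have hs : HasFDerivAt (fun p : ℝ × ℝ => p.2) (ContinuousLinearMap.snd ℝ ℝ ℝ) (a, b) := hasFDerivAt_snd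
  have h1 := (((hf.add_const 1).add (hf.add hs).exp).sub hf.exp).add hL
  refine ⟨_, h1, ?_⟩
  have hea : Real.exp a < 1 := Real.exp_lt_one_iff.2 ha
  have := Real.exp_pos (a + b)
  simp
  linarith

/-! ### the log-radius -/

lemma w_mono {a a' : ℝ} (b : ℝ) (h : a ≤ a') (u : U) : S.w a b u ≤ S.w a' b u := by
  apply Real.exp_le_exp.2; gcongr

noncomputable def rho (b : ℝ) : ℝ := sSup {a | Summable (S.w a b)}

lemma bdd (b : ℝ) : BddAbove {a | Summable (S.w a b)} :=
  ⟨0, fun _ h => (S.neg_of_summable h).1.le⟩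

lemma nonemp (b : ℝ) : {a | Summable (S.w a b)}.Nonempty := ⟨_, S.summable_small b⟩

lemma summable_lt {a b : ℝ} (h : a < S.rho b) : Summable (S.w a b) := by
  obtain ⟨a', h', hlt⟩ := exists_lt_of_lt_csSup (S.nonemp b) h
  exact Summable.of_nonneg_of_le (fun u => (S.w_pos a b u).le) (S.w_mono b hlt.le) h'

lemma le_rho {a b : ℝ} (h : Summable (S.w a b)) : a ≤ S.rho b := le_csSup (S.bdd b) h

lemma summable_rho (b : ℝ) : Summable (S.w (S.rho b) b) := by
  refine summable_of_sum_le (fun u => (S.w_pos _ b u).le) 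
    (c := 2 * Real.exp (1 - (S.rho b - 1)) + 1) fun s => ?_
  have hcont : Continuous (fun a => ∑ u ∈ s, S.w a b u) := by unfold w; fun_prop
  have ht : Filter.Tendsto (fun a => ∑ u ∈ s, S.w a b u) (nhdsWithin (S.rho b) (Set.Iio (S.rho b)))
      (nhds (∑ u ∈ s, S.w (S.rho b) b u)) := (hcont.tendsto _).mono_left nhdsWithin_le_nhds
  refine le_of_tendsto ht ?_
  filter_upwards [Ioo_mem_nhdsLT (show S.rho b - 1 < S.rho b by linarith)] with a ha
  have hs := S.summable_lt ha.2
  exact (hs.sum_le_tsum s fun u _ => (S.w_pos a b u).le).trans (S.TT_bound hs ha.1.le)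

lemma g_rho (b : ℝ) : S.g (S.rho b) b = 0 := by
  have h := S.summable_rho b
  refine le_antisymm (S.g_le_of_summable h).1 ?_
  by_contra hlt
  push Not at hlt
  obtain ⟨ha, hb⟩ := S.neg_of_summable h
  obtain ⟨L, hL, -⟩ := S.g_deriv h
  obtain ⟨_, _, _, δ, hδ, hs⟩ := S.H_deriv h
  have hc : Continuous (fun a : ℝ => ((a, b) : ℝ × ℝ)) := by fun_prop
  have ht : Filter.Tendsto (fun a : ℝ => ((a, b) : ℝ × ℝ)) (nhds (S.rho b)) (nhds (S.rho b, b)) :=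
    hc.tendsto _
  have hct : ContinuousAt (fun a => S.g a b) (S.rho b) :=
    ContinuousAt.comp (f := fun a : ℝ => (a, b)) (g := fun p : ℝ × ℝ => S.g p.1 p.2)
      hL.continuousAt hc.continuousAt
  have e1 : ∀ᶠ a in nhds (S.rho b), S.g a b < 0 :=
    hct.eventually (Iio_mem_nhds hlt)
  have e2 : ∀ᶠ a in nhds (S.rho b), ((a, b) : ℝ × ℝ) ∈ Metric.ball (S.rho b, b) δ :=
    ht.eventually (Metric.ball_mem_nhds _ hδ)
  have e3 : ∀ᶠ a in nhds (S.rho b), a < 0 := Iio_mem_nhds ha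
  have e4 : ∀ᶠ a in nhds (S.rho b), a + b < 0 := by
    have : Filter.Tendsto (fun a : ℝ => a + b) (nhds (S.rho b)) (nhds (S.rho b + b)) := 
      Continuous.tendsto (by fun_prop) _
    exact this.eventually (Iio_mem_nhds hb)
  have e6 := e1.and (e2.and (e3.and e4))
  obtain ⟨ε, hε, hball⟩ := Metric.eventually_nhds_iff.1 e6
  have hd : Dist.dist (S.rho b + ε / 2) (S.rho b) < ε := by
    rw [Real.dist_eq, add_sub_cancel_left, abs_of_pos (by positivity)]; linarith
  obtain ⟨h1, h2, h3, h4⟩ := hball hd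
  have h6 := hs (S.rho b + ε / 2, b) h2
  have h7 := S.summable_of_g h3 h4 h6 h1.le
  have := S.le_rho h7
  linarith

lemma TT_rho (b : ℝ) : S.TT (S.rho b) b = 1 + Real.exp (S.rho b + b) - Real.exp (S.rho b) :=
  (S.g_le_of_summable (S.summable_rho b)).2 (S.g_rho b)

lemma w_convex {a₁ a₂ b₁ b₂ s t : ℝ} (hs : 0 ≤ s) (ht : 0 ≤ t) (hst : s + t = 1) (u : U) :
    S.w (s * a₁ + t * a₂) (s * b₁ + t * b₂) u ≤ s * S.w a₁ b₁ u + t * S.w a₂ b₂ u := by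
  have := convexOn_exp.2 (Set.mem_univ (S.n u * a₁ + S.l u * b₁)) 
    (Set.mem_univ (S.n u * a₂ + S.l u * b₂)) hs ht hst
  simp only [smul_eq_mul] at this
  unfold w
  refine le_trans (le_of_eq ?_) this
  congr 1; ring

lemma rho_concave : ConcaveOn ℝ Set.univ S.rho := by
  refine ⟨convex_univ, fun b₁ _ b₂ _ s t hs ht hst => ?_⟩
  simp only [smul_eq_mul]
  apply S.le_rho
  exact Summable.of_nonneg_of_le (fun u => (S.w_pos _ _ u).le) (S.w_convex hs ht hst) 
    (((S.summable_rho b₁).mul_left s).add ((S.summable_rho b₂).mul_left t))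

lemma rho_differentiable (b : ℝ) : DifferentiableAt ℝ S.rho b := by
  obtain ⟨L, hL, hL0⟩ := S.g_deriv (S.summable_rho b)
  obtain ⟨K, t, ht, hK⟩ := S.rho_concave.locallyLipschitz b
  have hcont : Filter.Tendsto (fun s => (S.rho s, s)) (nhds b) (nhds (S.rho b, b)) :=
    (S.rho_concave.locallyLipschitz.continuous.prodMk continuous_id).tendsto b
  have h1 := hL.isLittleO.comp_tendsto hcont
  have h2 : (fun s => (S.rho s, s) - (S.rho b, b)) =O[nhds b] (fun s => s - b) := by
    refine Asymptotics.IsBigO.of_bound (max K 1) ?_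
    filter_upwards [ht] with s hs
    have h3 := hK.dist_le_mul s hs b (mem_of_mem_nhds ht)
    rw [Real.dist_eq, Real.dist_eq] at h3
    rw [Prod.mk_sub_mk, Prod.norm_def, Real.norm_eq_abs, Real.norm_eq_abs]
    apply max_le
    · refine h3.trans ?_
      gcongr; exact le_max_left _ _
    · have := mul_le_mul_of_nonneg_right (le_max_right (K : ℝ) 1) (abs_nonneg (s - b))
      simpa using this
  have h3 := (h1.trans_isBigO h2).const_mul_left (-(L (1, 0))⁻¹)
  refine (HasDerivAt.differentiableAt (f' := -(L (1, 0))⁻¹ * L (0, 1)) ?_)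
  rw [hasDerivAt_iff_isLittleO]
  refine h3.congr_left fun s => ?_
  simp only [Function.comp, g_rho]
  have e : L ((S.rho s, s) - (S.rho b, b)) = (S.rho s - S.rho b) * L (1, 0) + (s - b) * L (0, 1) := by
    rw [← smul_eq_mul, ← smul_eq_mul, ← L.map_smul, ← L.map_smul, ← L.map_add]
    simp
  rw [e, smul_eq_mul]
  field_simp
  ring

lemma rho_unique {b₁ b₂ : ℝ} (h : S.rho b₁ + b₁ / 2 = S.rho b₂ + b₂ / 2)
    (hmax : ∀ b, S.rho b + b / 2 ≤ S.rho b₁ + b₁ / 2) : b₁ = b₂ := by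
  classical
  obtain ⟨b, hb⟩ : ∃ b, b = (1 / 2) * b₁ + (1 / 2) * b₂ := ⟨_, rfl⟩
  obtain ⟨a, ha⟩ : ∃ a, a = (1 / 2) * S.rho b₁ + (1 / 2) * S.rho b₂ := ⟨_, rfl⟩
  have hc := S.rho_concave.2 (Set.mem_univ b₁) (Set.mem_univ b₂) (show (0:ℝ) ≤ 1 / 2 by norm_num)
    (show (0:ℝ) ≤ 1 / 2 by norm_num) (by norm_num)
  simp only [smul_eq_mul] at hc
  rw [← ha, ← hb] at hc
  have hm := hmax b
  have hρ : S.rho b = a := by apply le_antisymm _ hc; linarith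
  have hS := fun b => S.summable_rho b
  -- remove the single vertex
  have hsplit : ∀ b, HasSum (fun u => if u = S.Φ 0 then 0 else S.w (S.rho b) b u) (1 - Real.exp (S.rho b)) := by
    intro b
    have h1 := hasSum_ite_eq (S.Φ 0) (Real.exp (S.rho b + b))
    have h2 := (hS b).hasSum.sub h1
    have e : (∑' u, S.w (S.rho b) b u) = 1 + Real.exp (S.rho b + b) - Real.exp (S.rho b) := S.TT_rho b
    rw [e] at h2
    have e3 : 1 + Real.exp (S.rho b + b) - Real.exp (S.rho b) - Real.exp (S.rho b + b)
      = 1 - Real.exp (S.rho b) := by ring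
    rw [e3] at h2
    refine h2.congr_fun ?_
    intro u
    split_ifs with hu
    · subst hu; rw [w_Φ0]; simp
    · simp
  have hle := hasSum_le (fun u => by
      by_cases hu : u = S.Φ 0
      · simp [hu]
      · simp only [hu, if_false]
        rw [hρ, ha, hb]
        exact S.w_convex (by norm_num) (by norm_num) (by norm_num) u)
    (hsplit b) (((hsplit b₁).mul_left (1 / 2)).add ((hsplit b₂).mul_left (1 / 2)))
  rw [hρ, ha] at hle
  by_contra hne
  have hne' : S.rho b₁ ≠ S.rho b₂ := fun h' => hne (by linarith)
  have := strictConvexOn_exp.2 (Set.mem_univ (S.rho b₁)) (Set.mem_univ (S.rho b₂)) hne'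
    (show (0:ℝ) < 1 / 2 by norm_num) (show (0:ℝ) < 1 / 2 by norm_num) (by norm_num)
  simp only [smul_eq_mul] at this
  linarith

lemma psi_concave : ConcaveOn ℝ Set.univ (fun b => S.rho b + b / 2) := by
  refine S.rho_concave.add ?_
  refine ⟨convex_univ, fun b₁ _ b₂ _ s t hs ht hst => ?_⟩
  simp only [smul_eq_mul]
  linarith

lemma psi_le (b : ℝ) : S.rho b + b / 2 ≤ -(|b| / 2) := by
  obtain ⟨h1, h2⟩ := S.neg_of_summable (S.summable_rho b)
  rcases abs_cases b with ⟨h, _⟩ | ⟨h, _⟩ <;> rw [h] <;> linarith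

lemma exists_max : ∃ b₀, ∀ b, S.rho b + b / 2 ≤ S.rho b₀ + b₀ / 2 := by
  have hc : Continuous (fun b => S.rho b + b / 2) :=
    S.rho_concave.locallyLipschitz.continuous.add (by fun_prop)
  have ht : Filter.Tendsto (fun b => S.rho b + b / 2) (Filter.cocompact ℝ) Filter.atBot := by
    refine Filter.tendsto_atBot_mono S.psi_le ?_
    refine Filter.tendsto_neg_atTop_atBot.comp ?_
    exact (tendsto_norm_cocompact_atTop (E := ℝ)).atTop_div_const (by norm_num)
  exact hc.exists_forall_ge ht

lemma max_of_deriv {b : ℝ} (h : deriv (fun b => S.rho b + b / 2) b = 0) (b' : ℝ) :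
    S.rho b' + b' / 2 ≤ S.rho b + b / 2 := by
  have hd : HasDerivAt (fun b => S.rho b + b / 2) 0 b := by
    rw [← h]
    exact ((S.rho_differentiable b).add (by fun_prop)).hasDerivAt
  rcases lt_trichotomy b b' with hlt | rfl | hlt
  · have := S.psi_concave.slope_le_of_hasDerivAt (Set.mem_univ b) (Set.mem_univ b') hlt hd
    rw [slope_def_field, div_nonpos_iff] at this
    rcases this with h | h <;> linarith [h.1, h.2]
  · exact le_rfl
  · have := S.psi_concave.le_slope_of_hasDerivAt (Set.mem_univ b') (Set.mem_univ b) hlt hd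
    rw [slope_def_field, div_nonneg_iff] at this
    rcases this with h | h <;> linarith [h.1, h.2]

end TreeSys

noncomputable def treeSys : TreeSys UT where
  n := uSize
  l := uLeaves
  Φ := graftU
  bij := graftU_bij
  hn := uSize_graft
  hl0 := by rw [uLeaves_graft, if_pos rfl]
  hl := fun m hm => by rw [uLeaves_graft, if_neg hm]
  hle := uLeaves_le
  hfin := uSize_finite

lemma w_eq (a b : ℝ) (u : UT) :
    Real.exp a ^ uSize u * Real.exp b ^ uLeaves u = treeSys.w a b u := by
  unfold TreeSys.w
  rw [Real.exp_add, Real.exp_nat_mul, Real.exp_nat_mul]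
  rfl

lemma rFun_eq (b : ℝ) : rFun (Real.exp b) = Real.exp (treeSys.rho b) := by
  have key : ∀ a, Summable (fun p : ℕ × ℕ => (aCount p.1 p.2 : ℝ) * Real.exp a ^ p.1 * Real.exp b ^ p.2) ↔
      Summable (treeSys.w a b) := by
    intro a
    rw [summable_iff _ _ (Real.exp_pos a) (Real.exp_pos b)]
    simp only [w_eq]
  unfold rFun
  refine IsGreatest.csSup_eq ⟨⟨Real.exp_pos _, (key _).2 (treeSys.summable_rho b)⟩, ?_⟩
  rintro x ⟨hx, hs⟩
  rw [← Real.exp_log hx] at hs ⊢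
  exact Real.exp_le_exp.2 (treeSys.le_rho ((key _).1 hs))

lemma rhat_eq {z : ℝ} (hz : 0 < z) : 
    rhat z = Real.exp (treeSys.rho (Real.log z) + Real.log z / 2) := by
  unfold rhat
  rw [Real.exp_add, ← rFun_eq, Real.exp_log hz, Real.sqrt_eq_rpow, Real.rpow_def_of_pos hz]
  congr 2
  ring

lemma deriv_rhat {z : ℝ} (hz : 0 < z) (h : deriv rhat z = 0) :
    deriv (fun b => treeSys.rho b + b / 2) (Real.log z) = 0 := by
  have hd : HasDerivAt (fun b => treeSys.rho b + b / 2) 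
    (deriv (fun b => treeSys.rho b + b / 2) (Real.log z)) (Real.log z) := 
    ((treeSys.rho_differentiable _).add (by fun_prop)).hasDerivAt
  have h1 := (hd.comp z (Real.hasDerivAt_log hz.ne')).exp
  have h2 : rhat =ᶠ[nhds z] fun x => Real.exp (((fun b => treeSys.rho b + b / 2) ∘ Real.log) x) := by
    filter_upwards [lt_mem_nhds hz] with x hx
    exact rhat_eq hx
  rw [(h1.congr_of_eventuallyEq h2).deriv] at h
  rcases mul_eq_zero.1 h with h | h
  · exact absurd h (Real.exp_pos _).ne'
  · exact (mul_eq_zero.1 h).resolve_right (inv_ne_zero hz.ne')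

/-- Lemma 4: `r̂` has exactly one critical point on `(0,∞)`, and at this point
it attains its global maximum over `(0,∞)`. -/
theorem lemma4 :
    ∃ ζ₀ : ℝ, 0 < ζ₀ ∧ deriv rhat ζ₀ = 0 ∧
      (∀ ζ : ℝ, 0 < ζ → deriv rhat ζ = 0 → ζ = ζ₀) ∧
      (∀ ζ : ℝ, 0 < ζ → rhat ζ ≤ rhat ζ₀) := by
  obtain ⟨b₀, hb₀⟩ := treeSys.exists_max
  have hmax : ∀ ζ : ℝ, 0 < ζ → rhat ζ ≤ rhat (Real.exp b₀) := by
    intro ζ hζ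
    rw [rhat_eq hζ, rhat_eq (Real.exp_pos _), Real.log_exp]
    exact Real.exp_le_exp.2 (hb₀ _)
  refine ⟨Real.exp b₀, Real.exp_pos _, ?_, ?_, hmax⟩
  · apply IsLocalMax.deriv_eq_zero
    filter_upwards [lt_mem_nhds (Real.exp_pos b₀)] with ζ hζ
    exact hmax ζ hζ
  · intro ζ hζ hd
    have h := treeSys.max_of_deriv (deriv_rhat hζ hd)
    have := treeSys.rho_unique (le_antisymm (h _) (hb₀ _)) hb₀
    rw [this, Real.exp_log hζ]
end

section
/- (Proposition 5) Let z_0 > 0 be the point where r̂(ζ) := r(ζ)√ζ attains its maximum and x_0 := r̂(z_0). For ζ > 0 set a_n^−(ζ) := Σ_{k ≤ n/2} a_{n,k} ζ^k and a_n^+(ζ) := Σ_{k > n/2} a_{n,k} ζ^k. Then for every ζ > 0: the radius of convergence of the power series Σ_n a_n^−(ζ) x^n equals r̂_−(ζ)/√ζ, where r̂_−(ζ) := max_{0 < ω ≤ ζ} r̂(ω) (= r̂(ζ) if ζ ≤ z_0 and = x_0 if ζ ≥ z_0), and the radius of convergence of Σ_n a_n^+(ζ) x^n equals r̂_+(ζ)/√ζ,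 where r̂_+(ζ) := sup_{ω ≥ ζ} r̂(ω) (= r̂(ζ) if ζ ≥ z_0 and = x_0 if ζ ≤ z_0). -/
open SimpleGraph

/-- `a_n^−(ζ) = Σ_{k ≤ n/2} a_{n,k} ζ^k`. -/
noncomputable def aMinusP (n : ℕ) (ζ : ℝ) : ℝ :=
  ∑' k : ℕ, if 2 * k ≤ n then (aCount n k : ℝ) * ζ ^ k else 0

/-- `a_n^+(ζ) = Σ_{k > n/2} a_{n,k} ζ^k`. -/
noncomputable def aPlusP (n : ℕ) (ζ : ℝ) : ℝ :=
  ∑' k : ℕ, if n < 2 * k then (aCount n k : ℝ) * ζ ^ k else 0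

namespace P5

section Join
variable {V W V' W' : Type} 

/-- Adjacency of the join. -/
def jAdj (G : SimpleGraph V) (r : V) (H : SimpleGraph W) (s : W) :
    Option (V ⊕ W) → Option (V ⊕ W) → Prop
  | none, none => False
  | none, some (Sum.inl v) => v = r
  | none, some (Sum.inr w) => w = s
  | some (Sum.inl v), none => v = r
  | some (Sum.inr w), none => w = s
  | some (Sum.inl v), some (Sum.inl v') => G.Adj v v'
  | some (Sum.inr v), some (Sum.inr v') => H.Adj v v'
  | some (Sum.inl _), some (Sum.inr _) => False
  | some (Sum.inr _), some (Sum.inl _) => False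

/-- A new root whose two branches are the two given rooted graphs. -/
def join (G : SimpleGraph V) (r : V) (H : SimpleGraph W) (s : W) :
    SimpleGraph (Option (V ⊕ W)) where
  Adj := jAdj G r H s
  symm := ⟨by
    rintro (_ | _ | _) (_ | _ | _) h <;> first | exact h | exact G.adj_symm h | exact H.adj_symm h⟩
  loopless := ⟨by
    rintro (_ | _ | _) h
    · exact h
    · exact G.loopless.irrefl _ h
    · exact H.loopless.irrefl _ h⟩

variable (G : SimpleGraph V) (r : V) (H : SimpleGraph W) (s : W)
variable (G' : SimpleGraph V') (r' : V') (H' : SimpleGraph W') (s' : W')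

theorem join_connected (hG : G.Connected) (hH : H.Connected) : (join G r H s).Connected := by
  have h0 : ∀ x, (join G r H s).Reachable none x := by
    rintro (_ | v | w)
    · exact Reachable.refl _
    · have h1 : (join G r H s).Adj none (some (Sum.inl r)) := rfl
      let f : G →g join G r H s := ⟨fun v => some (Sum.inl v), fun h => h⟩
      exact h1.reachable.trans ((hG.preconnected r v).map f)
    · have h1 : (join G r H s).Adj none (some (Sum.inr s)) := rfl
      let f : H →g join G r H s := ⟨fun v => some (Sum.inr v), fun h => h⟩
      exact h1.reachable.trans ((hH.preconnected s w).map f)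
  exact ⟨fun x y => (h0 x).symm.trans (h0 y)⟩

theorem join_acyclic [Finite V] [Finite W] (hG : G.IsTree) (hH : H.IsTree) :
    (join G r H s).IsAcyclic := by
  have hc := join_connected G r H s hG.1 hH.1
  have h1 := (isTree_iff_connected_and_card.1 hG).2
  have h2 := (isTree_iff_connected_and_card.1 hH).2
  have hsub : (join G r H s).edgeSet ⊆
      (((Sym2.map (fun v => some (Sum.inl v))) '' G.edgeSet) ∪
      ((Sym2.map (fun v => some (Sum.inr v))) '' H.edgeSet)) ∪
      {s(none, some (Sum.inl r)), s(none, some (Sum.inr s))} := by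
    intro e
    induction e using Sym2.ind with
    | _ x y =>
      intro h
      have h' : jAdj G r H s x y := h
      rcases x with (_ | v | w) <;> rcases y with (_ | v' | w') <;> simp only [jAdj] at h'
      · subst h'; right; simp
      · subst h'; right; simp
      · subst h'; right; simp [Sym2.eq_swap]
      · left; left; exact ⟨s(v, v'), h', rfl⟩
      · subst h'; right; simp [Sym2.eq_swap]
      · left; right; exact ⟨s(w, w'), h', rfl⟩
  have h3 := Set.ncard_le_ncard hsub (Set.toFinite _)
  have h4 := Set.ncard_union_le (((Sym2.map (fun v => (some (Sum.inl v) : Option (V ⊕ W)))) '' G.edgeSet) ∪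
      ((Sym2.map (fun v => some (Sum.inr v))) '' H.edgeSet)) {s(none, some (Sum.inl r)), s(none, some (Sum.inr s))}
  have h5 := Set.ncard_union_le (((Sym2.map (fun v => (some (Sum.inl v) : Option (V ⊕ W)))) '' G.edgeSet))
      ((Sym2.map (fun v => some (Sum.inr v))) '' H.edgeSet)
  have h6 := Set.ncard_image_le (f := (Sym2.map (fun v => (some (Sum.inl v) : Option (V ⊕ W))))) (Set.toFinite G.edgeSet)
  have h7 := Set.ncard_image_le (f := (Sym2.map (fun v => (some (Sum.inr v) : Option (V ⊕ W))))) (Set.toFinite H.edgeSet)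
  have h8 := Set.ncard_insert_le (s(none, some (Sum.inl r))) ({s(none, some (Sum.inr s))} : Set (Sym2 (Option (V ⊕ W))))
  rw [Set.ncard_singleton] at h8
  have h9 := hc.card_vert_le_card_edgeSet_add_one
  have h10 : Nat.card (Option (V ⊕ W)) = Nat.card V + Nat.card W + 1 := by
    rw [Finite.card_option, Nat.card_sum]
  simp only [Nat.card_coe_set_eq] at h1 h2 h9
  refine (isTree_iff_connected_and_card.2 ⟨hc, ?_⟩).2
  rw [Nat.card_coe_set_eq]
  omega

/-- Leaves in arbitrary rooted graphs. -/
def Lf (v : V) : Prop := Nat.card V = 1 ∨ ((G.neighborSet v).ncard = 1 ∧ v ≠ r)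

variable {G r G' r'} in
theorem Lf_iso (e : G ≃g G') (he : e r = r') (v : V) : Lf G r v ↔ Lf G' r' (e v) := by
  unfold Lf
  have h1 : Nat.card V = Nat.card V' := Nat.card_congr e.toEquiv
  have h2 : (G.neighborSet v).ncard = (G'.neighborSet (e v)).ncard := by
    rw [← Nat.card_coe_set_eq, ← Nat.card_coe_set_eq]
    exact Nat.card_congr (e.mapNeighborSet v)
  rw [h1, h2, ← he, e.injective.ne_iff]

theorem Lf_join_none : ¬ Lf (join G r H s) none none := by
  rintro (h | ⟨-, h⟩)
  · have := Nat.card_eq_one_iff_unique.1 h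
    have h2 := this.1.elim none (some (Sum.inl r))
    cases h2
  · exact h rfl

theorem Lf_join_inl [Finite V] [Finite W] (hG : G.Connected) (v : V) :
    Lf (join G r H s) none (some (Sum.inl v)) ↔ Lf G r v := by
  have hcard : Nat.card (Option (V ⊕ W)) ≠ 1 := by
    intro h
    have := Nat.card_eq_one_iff_unique.1 h
    have h2 := this.1.elim none (some (Sum.inl r))
    cases h2
  have hinj : Function.Injective (fun v => (some (Sum.inl v) : Option (V ⊕ W))) := by
    intro a b h; simpa using h
  unfold Lf
  simp only [hcard, false_or, ne_eq, reduceCtorEq, not_false_eq_true, and_true]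
  by_cases hv : v = r
  · subst hv
    have hN : (join G v H s).neighborSet (some (Sum.inl v)) =
        insert none ((fun v => some (Sum.inl v)) '' G.neighborSet v) := by
      ext x
      rcases x with (_ | a | b)
      · simp; rfl
      · simp; rfl
      · simp; exact id
    rw [hN, Set.ncard_insert_of_notMem (by simp) (Set.toFinite _), Set.ncard_image_of_injective _ hinj]
    simp only [Nat.add_eq_right, not_true_eq_false, and_false, or_false]
    rw [Set.ncard_eq_zero (Set.toFinite _)]
    constructor
    · intro h
      rw [Nat.card_eq_one_iff_unique]
      refine ⟨⟨fun a b => ?_⟩, ⟨v⟩⟩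
      have key : ∀ a, a = v := by
        intro a
        by_contra hne
        have : Nontrivial V := ⟨a, v, hne⟩
        obtain ⟨w, hw⟩ := hG.preconnected.exists_adj_of_nontrivial v
        have : w ∈ G.neighborSet v := hw
        rw [h] at this; exact this
      rw [key a, key b]
    · intro h
      have := (Nat.card_eq_one_iff_unique.1 h).1
      ext w
      simp only [mem_neighborSet, Set.mem_empty_iff_false, iff_false]
      intro hw
      exact hw.ne (this.elim _ _)
  · have hN : (join G r H s).neighborSet (some (Sum.inl v)) =
        ((fun v => some (Sum.inl v)) '' G.neighborSet v) := by
      ext x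
      rcases x with (_ | a | b)
      · simp; exact hv
      · simp; rfl
      · simp; exact id
    rw [hN, Set.ncard_image_of_injective _ hinj]
    constructor
    · intro h; right; exact ⟨h, hv⟩
    · rintro (h | h)
      · exact absurd ((Nat.card_eq_one_iff_unique.1 h).1.elim v r) hv
      · exact h.1

/-- Swap of the two branches. -/
def swapIso : join G r H s ≃g join H s G r where
  toEquiv := Equiv.optionCongr (Equiv.sumComm V W)
  map_rel_iff' := by
    rintro (_ | _ | _) (_ | _ | _) <;> exact Iff.rfl

theorem swapIso_none : swapIso G r H s none = none := rfl
theorem swapIso_inl (v : V) : swapIso G r H s (some (Sum.inl v)) = some (Sum.inr v) := rfl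
theorem swapIso_inr (v : W) : swapIso G r H s (some (Sum.inr v)) = some (Sum.inl v) := rfl

theorem Lf_join_inr [Finite V] [Finite W] (hH : H.Connected) (v : W) :
    Lf (join G r H s) none (some (Sum.inr v)) ↔ Lf H s v := by
  rw [Lf_iso (swapIso G r H s) (swapIso_none G r H s), swapIso_inr, Lf_join_inl _ _ _ _ hH]

theorem card_Lf_join [Finite V] [Finite W] (hG : G.Connected) (hH : H.Connected) :
    Nat.card {x // Lf (join G r H s) none x} =
      Nat.card {v // Lf G r v} + Nat.card {w // Lf H s w} := by
  rw [← Nat.card_sum]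
  refine (Nat.card_congr (Equiv.ofBijective
    (fun x : {v // Lf G r v} ⊕ {w // Lf H s w} => (match x with
      | Sum.inl v => ⟨some (Sum.inl v.1), (Lf_join_inl G r H s hG v.1).2 v.2⟩
      | Sum.inr v => ⟨some (Sum.inr v.1), (Lf_join_inr G r H s hH v.1).2 v.2⟩ :
        {x // Lf (join G r H s) none x})) ⟨?_, ?_⟩)).symm
  · rintro (⟨a, ha⟩ | ⟨a, ha⟩) (⟨b, hb⟩ | ⟨b, hb⟩) h <;> simp at h <;> simp [h]
  · rintro ⟨(_ | v | w), h⟩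
    · exact absurd h (Lf_join_none G r H s)
    · exact ⟨Sum.inl ⟨v, (Lf_join_inl G r H s hG v).1 h⟩, rfl⟩
    · exact ⟨Sum.inr ⟨w, (Lf_join_inr G r H s hH w).1 h⟩, rfl⟩

variable {G r H s G' r' H' s'}

theorem iso_inl (e : join G r H s ≃g join G' r' H' s') (h0 : e none = none)
    (h1 : e (some (Sum.inl r)) = some (Sum.inl r')) (hG : G.Connected) (v : V) :
    ∃ v', e (some (Sum.inl v)) = some (Sum.inl v') := by
  have h := (reachable_iff_reflTransGen r v).1 (hG.preconnected r v)
  induction h with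
  | refl => exact ⟨r', h1⟩
  | @tail a b _ hab ih =>
    obtain ⟨a', ha'⟩ := ih
    have h2 : (join G r H s).Adj (some (Sum.inl a)) (some (Sum.inl b)) := hab
    have h3 := e.map_rel_iff.2 h2
    rw [ha'] at h3
    rcases hb : e (some (Sum.inl b)) with (_ | b' | b')
    · rw [← h0] at hb
      have := e.injective hb
      cases this
    · exact ⟨b', rfl⟩
    · rw [hb] at h3; exact h3.elim

theorem iso_left (e : join G r H s ≃g join G' r' H' s') (h0 : e none = none)
    (h1 : e (some (Sum.inl r)) = some (Sum.inl r')) (hG : G.Connected) (hG' : G'.Connected) :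
    ∃ f : G ≃g G', f r = r' := by
  have A := iso_inl e h0 h1 hG
  have B := iso_inl e.symm (e.symm_apply_eq.2 h0.symm) (e.symm_apply_eq.2 h1.symm) hG'
  choose f hf using A
  choose g hg using B
  refine ⟨⟨⟨f, g, ?_, ?_⟩, ?_⟩, ?_⟩
  · intro v
    have := hg (f v)
    rw [← hf, e.symm_apply_apply] at this
    simpa using this.symm
  · intro v
    have := hf (g v)
    rw [← hg, e.apply_symm_apply] at this
    simpa using this.symm
  · intro a b
    have := e.map_rel_iff (a := some (Sum.inl a)) (b := some (Sum.inl b))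
    rw [hf, hf] at this
    exact this
  · have := hf r
    rw [h1] at this
    have h5 : r' = f r := by simpa using this
    exact h5.symm

theorem iso_both (e : join G r H s ≃g join G' r' H' s') (h0 : e none = none)
    (h1 : e (some (Sum.inl r)) = some (Sum.inl r')) (hG : G.Connected) (hG' : G'.Connected)
    (hH : H.Connected) (hH' : H'.Connected) :
    (∃ f : G ≃g G', f r = r') ∧ (∃ f : H ≃g H', f s = s') := by
  refine ⟨iso_left e h0 h1 hG hG', ?_⟩
  have h2 : e (some (Sum.inr s)) = some (Sum.inr s') := by
    have h2 : (join G r H s).Adj none (some (Sum.inr s)) := rfl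
    have h3 := e.map_rel_iff.2 h2
    rw [h0] at h3
    rcases hb : e (some (Sum.inr s)) with (_ | b' | b')
    · rw [hb] at h3; exact h3.elim
    · rw [hb] at h3
      have h4 : b' = r' := h3
      rw [h4, ← h1] at hb
      have := e.injective hb
      simp at this
    · rw [hb] at h3
      have h4 : b' = s' := h3
      rw [h4]
  refine iso_left (((swapIso G r H s).symm.trans e).trans (swapIso G' r' H' s')) ?_ ?_ hH hH'
  · change swapIso G' r' H' s' (e none) = none
    rw [h0]; rfl
  · change swapIso G' r' H' s' (e (some (Sum.inr s))) = _
    rw [h2]; rfl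

theorem iso_cases (e : join G r H s ≃g join G' r' H' s') (h0 : e none = none)
    (hG : G.Connected) (hG' : G'.Connected) (hH : H.Connected) (hH' : H'.Connected) :
    ((∃ f : G ≃g G', f r = r') ∧ (∃ f : H ≃g H', f s = s')) ∨
    ((∃ f : G ≃g H', f r = s') ∧ (∃ f : H ≃g G', f s = r')) := by
  have h2 : (join G r H s).Adj none (some (Sum.inl r)) := rfl
  have h3 := e.map_rel_iff.2 h2
  rw [h0] at h3
  rcases hb : e (some (Sum.inl r)) with (_ | b' | b')
  · rw [hb] at h3; exact h3.elim
  · rw [hb] at h3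
    have h4 : b' = r' := h3
    left
    exact iso_both e h0 (by rw [hb, h4]) hG hG' hH hH'
  · rw [hb] at h3
    have h4 : b' = s' := h3
    right
    refine iso_both (e.trans (swapIso G' r' H' s')) ?_ ?_ hG hH' hH hG'
    · change swapIso G' r' H' s' (e none) = none
      rw [h0]; rfl
    · change swapIso G' r' H' s' (e (some (Sum.inl r))) = _
      rw [hb, h4]; rfl

end Join

/-- Isomorphism classes of rooted trees with `n` vertices and `k` leaves. -/
abbrev Q (n k : ℕ) : Type := Quotient (Setoid.comap
    (Subtype.val : {t : RTree n // numLeaves t = k} → RTree n) (treeSetoid n))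

/-- All isomorphism classes of rooted trees. -/
abbrev U : Type := Σ p : ℕ × ℕ, Q p.1 p.2

instance finRTree (n : ℕ) : Finite (RTree n) := by
  refine Finite.of_injective (fun t : RTree n => (t.adj, t.root)) ?_
  rintro ⟨a, _, _, b⟩ ⟨c, _, _, d⟩ h
  simp only [Prod.mk.injEq] at h
  obtain ⟨rfl, rfl⟩ := h
  rfl

instance finQ (n k : ℕ) : Finite (Q n k) := Quotient.finite _

/-- number of vertices -/
def nv (x : U) : ℕ := x.1.1
/-- number of leaves -/
def nl (x : U) : ℕ := x.1.2
/-- a representative -/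
noncomputable def rep (x : U) : RTree (nv x) := (Quotient.out x.2).1

theorem rep_leaves (x : U) : numLeaves (rep x) = nl x := (Quotient.out x.2).2

theorem numLeaves_eq {n : ℕ} (t : RTree n) : numLeaves t = Nat.card {v // Lf t.adj t.root v} := by
  simp [numLeaves, Lf, IsLeafV]

theorem card_Lf_iso {V V' : Type} {G : SimpleGraph V} {G' : SimpleGraph V'} {r : V} {r' : V'}
    (e : G ≃g G') (he : e r = r') : Nat.card {v // Lf G r v} = Nat.card {v // Lf G' r' v} :=
  Nat.card_congr (e.toEquiv.subtypeEquiv (Lf_iso e he))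

theorem nl_le (x : U) : nl x ≤ nv x := by
  rw [← rep_leaves, numLeaves]
  calc _ ≤ Nat.card (Fin (nv x)) := Finite.card_subtype_le _
    _ = _ := by simp

theorem U_ext (x y : U) (e : (rep x).adj ≃g (rep y).adj) (he : e (rep x).root = (rep y).root) :
    x = y := by
  have h1 : nv x = nv y := by
    have := Nat.card_congr e.toEquiv
    simpa using this
  have h2 : nl x = nl y := by
    rw [← rep_leaves, ← rep_leaves, numLeaves_eq, numLeaves_eq]
    exact card_Lf_iso e he
  obtain ⟨⟨n, k⟩, q⟩ := x
  obtain ⟨⟨n', k'⟩, q'⟩ := y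
  change n = n' at h1
  change k = k' at h2
  subst h1
  subst h2
  congr 1
  rw [← Quotient.out_eq q, ← Quotient.out_eq q']
  exact Quotient.sound ⟨e, he⟩

/-- the class of a rooted tree -/
noncomputable def cls {n : ℕ} (t : RTree n) : U := ⟨(n, numLeaves t), Quotient.mk _ ⟨t, rfl⟩⟩

theorem cls_rep {n : ℕ} (t : RTree n) :
    ∃ e : (rep (cls t)).adj ≃g t.adj, e (rep (cls t)).root = t.root := by
  have := Quotient.mk_out (s := Setoid.comap
    (Subtype.val : {t' : RTree n // numLeaves t' = numLeaves t} → RTree n) (treeSetoid n)) ⟨t, rfl⟩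
  exact this

theorem exists_cls {V : Type} [Finite V] (G : SimpleGraph V) (r : V) (hc : G.Connected)
    (ha : G.IsAcyclic) : ∃ x : U, nv x = Nat.card V ∧ nl x = Nat.card {v // Lf G r v} ∧
      ∃ e : (rep x).adj ≃g G, e (rep x).root = r := by
  let e0 : V ≃ Fin (Nat.card V) := Finite.equivFin V
  let e1 : G ≃g G.map e0.toEmbedding := Iso.map e0 G
  let t : RTree (Nat.card V) := ⟨G.map e0.toEmbedding, e1.connected_iff.1 hc, e1.isAcyclic_iff.1 ha, e0 r⟩
  obtain ⟨e, he⟩ := cls_rep t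
  refine ⟨cls t, rfl, ?_, e.trans e1.symm, ?_⟩
  · change numLeaves t = _
    rw [numLeaves_eq]
    exact (card_Lf_iso e1 rfl).symm
  · change e1.symm (e _) = r
    rw [he]
    exact e1.symm_apply_apply r

theorem exists_jn (x y : U) : ∃ z : U, nv z = nv x + nv y + 1 ∧ nl z = nl x + nl y ∧
    ∃ e : (rep z).adj ≃g join (rep x).adj (rep x).root (rep y).adj (rep y).root,
      e (rep z).root = none := by
  obtain ⟨z, h1, h2, h3⟩ := exists_cls (join (rep x).adj (rep x).root (rep y).adj (rep y).root) none
    (join_connected _ _ _ _ (rep x).connected (rep y).connected)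
    (join_acyclic _ _ _ _ ⟨(rep x).connected, (rep x).acyclic⟩ ⟨(rep y).connected, (rep y).acyclic⟩)
  refine ⟨z, ?_, ?_, h3⟩
  · rw [h1, Finite.card_option, Nat.card_sum]; simp
  · rw [h2, card_Lf_join _ _ _ _ (rep x).connected (rep y).connected, ← numLeaves_eq, ← numLeaves_eq,
      rep_leaves, rep_leaves]

/-- join of classes -/
noncomputable def jn (p : U × U) : U := (exists_jn p.1 p.2).choose

theorem nv_jn (x y : U) : nv (jn (x, y)) = nv x + nv y + 1 := (exists_jn x y).choose_spec.1
theorem nl_jn (x y : U) : nl (jn (x, y)) = nl x + nl y := (exists_jn x y).choose_spec.2.1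

theorem jn_fib (x y x' y' : U) (h : jn (x, y) = jn (x', y')) :
    (x', y') = (x, y) ∨ (x', y') = (y, x) := by
  obtain ⟨e, he⟩ := (exists_jn x y).choose_spec.2.2
  obtain ⟨e', he'⟩ := (exists_jn x' y').choose_spec.2.2
  change (rep (jn (x, y))).adj ≃g _ at e
  change (rep (jn (x', y'))).adj ≃g _ at e'
  change e (rep (jn (x, y))).root = none at he
  change e' (rep (jn (x', y'))).root = none at he'
  generalize jn (x, y) = z at *
  generalize jn (x', y') = z' at *
  subst h
  have h0 : (e.symm.trans e') none = none := by
    change e' (e.symm none) = none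
    rw [← he, e.symm_apply_apply, he']
  rcases iso_cases (e.symm.trans e') h0 (rep x).connected (rep x').connected
    (rep y).connected (rep y').connected with ⟨⟨f, hf⟩, ⟨g, hg⟩⟩ | ⟨⟨f, hf⟩, ⟨g, hg⟩⟩
  · left; rw [U_ext _ _ f hf, U_ext _ _ g hg]
  · right; rw [U_ext _ _ f hf, U_ext _ _ g hg]

theorem exists_star (m : ℕ) : ∃ x : U, nv x = m + 2 ∧ nl x = m + 1 := by
  obtain ⟨x, h1, h2, -⟩ := exists_cls (starGraph (0 : Fin (m + 2))) 0 (connected_starGraph _)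
    (isAcyclic_starGraph _)
  refine ⟨x, by simpa using h1, ?_⟩
  rw [h2]
  have : ∀ v : Fin (m + 2), Lf (starGraph (0 : Fin (m + 2))) 0 v ↔ v ≠ 0 := by
    intro v
    unfold Lf
    constructor
    · rintro (h | h)
      · simp at h
      · exact h.2
    · intro hv
      right
      refine ⟨?_, hv⟩
      rw [Set.ncard_eq_one]
      refine ⟨0, ?_⟩
      ext w
      simp [starGraph_adj]
      constructor
      · rintro ⟨h1, h2 | h2⟩
        · exact absurd h2 hv
        · exact h2
      · rintro rfl
        exact ⟨hv, Or.inr rfl⟩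
  rw [Nat.card_congr (Equiv.subtypeEquivRight this)]
  simp [Nat.card_eq_fintype_card, Fintype.card_subtype_compl]

open scoped ENNReal

/-- excess -/
def dl (x : U) : ℤ := 2 * (nl x : ℤ) - ((nv x : ℤ) + 1)

/-- weight of a class -/
noncomputable def cw (Y : ℝ≥0∞) (x : U) : ℝ≥0∞ := Y ^ (nv x + 1) / 2

/-- total weight of classes with given excess -/
noncomputable def gs (Y : ℝ≥0∞) (d : ℤ) : ℝ≥0∞ := ∑' x : U, if dl x = d then cw Y x else 0

theorem tsum_two {α β : Type} (f : α → β) (h : β → ℝ≥0∞)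
    (hf : ∀ b, (f ⁻¹' {b}).encard ≤ 2) : ∑' a, h (f a) ≤ 2 * ∑' b, h b := by
  rw [← ENNReal.tsum_fiberwise (fun a => h (f a)) f, ← ENNReal.tsum_mul_left]
  refine ENNReal.tsum_le_tsum fun b => ?_
  have : ∀ x : f ⁻¹' {b}, h (f x.1) = h b := fun x => by
    have : f x.1 = b := x.2
    rw [this]
  simp only [this]
  rw [ENNReal.tsum_const]
  gcongr
  have h2 := hf b
  have h3 : ((ENat.card (f ⁻¹' {b}) : ℕ∞) : ℝ≥0∞) ≤ ((2 : ℕ∞) : ℝ≥0∞) := by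
    rw [ENat.toENNReal_le]
    exact h2
  simpa using h3

theorem jn_encard (z : U) : (jn ⁻¹' {z}).encard ≤ 2 := by
  by_cases h : (jn ⁻¹' {z}).Nonempty
  · obtain ⟨⟨x, y⟩, hxy⟩ := h
    refine (Set.encard_le_encard (t := {(x, y), (y, x)}) ?_).trans ((Set.encard_insert_le _ _).trans (by rw [Set.encard_singleton]; norm_num))
    rintro ⟨x', y'⟩ h'
    exact jn_fib x y x' y' (hxy.trans h'.symm)
  · rw [Set.not_nonempty_iff_eq_empty] at h
    rw [h]; simp

theorem dl_jn (x y : U) : dl (jn (x, y)) = dl x + dl y := by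
  unfold dl
  rw [nv_jn, nl_jn]
  push_cast
  ring

theorem cw_jn (Y : ℝ≥0∞) (x y : U) : 2 * (cw Y x * cw Y y) = cw Y (jn (x, y)) := by
  unfold cw
  rw [nv_jn, show nv x + nv y + 1 + 1 = (nv x + 1) + (nv y + 1) by ring, pow_add _ (nv x + 1)]
  simp only [div_eq_mul_inv]
  calc 2 * (Y ^ (nv x + 1) * 2⁻¹ * (Y ^ (nv y + 1) * 2⁻¹))
      = (2 * 2⁻¹) * (Y ^ (nv x + 1) * Y ^ (nv y + 1) * 2⁻¹) := by ring
    _ = _ := by rw [ENNReal.mul_inv_cancel (by simp) (by simp), one_mul]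

theorem gs_super (Y : ℝ≥0∞) (d e : ℤ) : gs Y d * gs Y e ≤ gs Y (d + e) := by
  have h1 : 2 * (gs Y d * gs Y e) ≤ 2 * gs Y (d + e) := by
    refine le_trans ?_ (tsum_two jn (fun z => if dl z = d + e then cw Y z else 0) jn_encard)
    unfold gs
    rw [← ENNReal.tsum_mul_right, ENNReal.tsum_prod', ← ENNReal.tsum_mul_left]
    refine ENNReal.tsum_le_tsum fun x => ?_
    rw [← ENNReal.tsum_mul_left, ← ENNReal.tsum_mul_left]
    refine ENNReal.tsum_le_tsum fun y => ?_
    by_cases hx : dl x = d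
    · by_cases hy : dl y = e
      · rw [if_pos hx, if_pos hy, if_pos (by rw [dl_jn, hx, hy]), cw_jn]
      · simp [hy]
    · simp [hx]
  exact (ENNReal.mul_le_mul_iff_right (by simp) (by simp)).1 h1

theorem real_super (h : ℤ → ℝ) (h0 : h 0 ≤ 0) (hs : ∀ d e, h d + h e ≤ h (d + e)) :
    ∃ t : ℝ, ∀ d : ℤ, h d ≤ t * d := by
  have hm : ∀ (d : ℤ) (n : ℕ), (n + 1 : ℝ) * h d ≤ h ((n + 1 : ℤ) * d) := by
    intro d n
    induction n with
    | zero => simp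
    | succ n ih =>
      have := hs ((n + 1 : ℤ) * d) d
      push_cast
      rw [show ((n : ℤ) + 1 + 1) * d = (n + 1 : ℤ) * d + d by ring]
      linarith
  have hc : ∀ a b : ℕ, h (a + 1 : ℤ) / (a + 1) ≤ - h (-(b + 1 : ℤ)) / (b + 1) := by
    intro a b
    rw [div_le_div_iff₀ (by positivity) (by positivity)]
    have h1 := hm (a + 1) b
    have h2 := hm (-(b + 1)) a
    have h3 := hs ((b + 1 : ℤ) * (a + 1)) ((a + 1 : ℤ) * (-(b + 1)))
    rw [show ((b + 1 : ℤ) * (a + 1)) + ((a + 1 : ℤ) * (-(b + 1))) = 0 by ring] at h3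
    linarith
  refine ⟨⨆ a : ℕ, h (a + 1 : ℤ) / (a + 1), fun d => ?_⟩
  have hb : BddAbove (Set.range fun a : ℕ => h (a + 1 : ℤ) / (a + 1)) :=
    ⟨_, by rintro _ ⟨a, rfl⟩; exact hc a 0⟩
  rcases lt_trichotomy d 0 with hd | hd | hd
  · obtain ⟨b, rfl⟩ : ∃ b : ℕ, d = -(b + 1 : ℤ) := ⟨(-d - 1).toNat, by omega⟩
    have := ciSup_le (fun a => hc a b)
    rw [le_div_iff₀ (by positivity)] at this
    push_cast
    linarith
  · subst hd; simpa using h0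
  · obtain ⟨a, rfl⟩ : ∃ b : ℕ, d = (b + 1 : ℤ) := ⟨(d - 1).toNat, by omega⟩
    have := le_ciSup hb a
    rw [div_le_iff₀ (by positivity)] at this
    push_cast
    linarith

theorem ex_pos : ∃ x : U, dl x = 1 ∧ nv x = 4 := by
  obtain ⟨x, h1, h2⟩ := exists_star 2
  exact ⟨x, by unfold dl; rw [h1, h2]; norm_num, h1⟩

theorem ex_neg : ∃ x : U, dl x = -1 ∧ nv x = 2 := by
  obtain ⟨x, h1, h2⟩ := exists_star 0
  exact ⟨x, by unfold dl; rw [h1, h2]; norm_num, h1⟩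

theorem cw_le_gs (Y : ℝ≥0∞) (x : U) : cw Y x ≤ gs Y (dl x) := by
  have := ENNReal.le_tsum (f := fun z => if dl z = dl x then cw Y z else 0) x
  rw [if_pos rfl] at this
  exact this

theorem cw_pos {Y : ℝ≥0∞} (hY : Y ≠ 0) (x : U) : cw Y x ≠ 0 := by
  unfold cw
  simp [hY]

theorem gs_ne_zero {Y : ℝ≥0∞} (hY : Y ≠ 0) (d : ℤ) : gs Y d ≠ 0 := by
  obtain ⟨a, ha, -⟩ := ex_pos
  obtain ⟨b, hb, -⟩ := ex_neg
  have h1 : gs Y 1 ≠ 0 := fun h => cw_pos hY a (le_antisymm (by rw [← h, ← ha]; exact cw_le_gs _ _) bot_le)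
  have h2 : gs Y (-1) ≠ 0 := fun h => cw_pos hY b (le_antisymm (by rw [← h, ← hb]; exact cw_le_gs _ _) bot_le)
  have hmul : ∀ d e, gs Y d ≠ 0 → gs Y e ≠ 0 → gs Y (d + e) ≠ 0 := by
    intro d e hd he h
    have := gs_super Y d e
    rw [h] at this
    have := le_antisymm this bot_le
    exact mul_ne_zero hd he this
  induction d using Int.induction_on with
  | zero => exact hmul 1 (-1) h1 h2
  | succ n ih => exact hmul _ _ ih h1
  | pred n ih => exact hmul _ _ ih h2

theorem gs0_le_one {Y : ℝ≥0∞} (h : gs Y 0 ≠ ∞) : gs Y 0 ≤ 1 := by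
  by_contra hlt
  push Not at hlt
  have h1 := gs_super Y 0 0
  rw [add_zero] at h1
  have h2 : gs Y 0 * gs Y 0 ≤ gs Y 0 * 1 := by simpa using h1
  have := (ENNReal.mul_le_mul_iff_right (ne_of_gt (lt_trans zero_lt_one hlt)) h).1 h2
  exact absurd this (not_le.2 hlt)

theorem gs_bound {Y : ℝ≥0∞} (hY : Y ≠ 0) (h : gs Y 0 ≠ ∞) :
    ∃ u : ℝ, 0 < u ∧ ∀ d : ℤ, gs Y d * ENNReal.ofReal (u ^ d) ≤ 1 := by
  have h0 := gs0_le_one h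
  have hfin : ∀ d, gs Y d ≠ ∞ := by
    intro d hd
    have h1 := gs_super Y d (-d)
    rw [hd, ENNReal.top_mul (gs_ne_zero hY _), add_neg_cancel] at h1
    exact h (top_le_iff.1 h1)
  have hpos : ∀ d, 0 < (gs Y d).toReal := fun d => ENNReal.toReal_pos (gs_ne_zero hY d) (hfin d)
  obtain ⟨t, ht⟩ := real_super (fun d => Real.log (gs Y d).toReal)
    (Real.log_nonpos (hpos 0).le (by simpa using ENNReal.toReal_mono (by simp) h0))
    (by
      intro d e
      rw [← Real.log_mul (hpos d).ne' (hpos e).ne', ← ENNReal.toReal_mul]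
      refine Real.log_le_log ?_ (ENNReal.toReal_mono (hfin _) (gs_super Y d e))
      rw [ENNReal.toReal_mul]
      exact mul_pos (hpos d) (hpos e))
  refine ⟨Real.exp (-t), Real.exp_pos _, fun d => ?_⟩
  rw [← ENNReal.ofReal_toReal (hfin d), ← ENNReal.ofReal_mul (hpos d).le, ENNReal.ofReal_le_one]
  have h1 : (gs Y d).toReal ≤ Real.exp (t * d) := by
    rw [← Real.log_le_iff_le_exp (hpos d)]; exact ht d
  calc _ ≤ Real.exp (t * d) * Real.exp (-t) ^ d := by gcongr
    _ = 1 := by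
        rw [← Real.rpow_intCast, ← Real.exp_mul, ← Real.exp_add, Real.exp_eq_one_iff]; ring

/-- weight with reals -/
noncomputable def wt (y u : ℝ) (x : U) : ℝ≥0∞ :=
  ENNReal.ofReal (y ^ nv x * u ^ (2 * (nl x : ℤ) - nv x))

/-- full series -/
noncomputable def As (y u : ℝ) : ℝ≥0∞ := ∑' x : U, wt y u x
/-- minus series -/
noncomputable def Ms (y u : ℝ) : ℝ≥0∞ := ∑' x : U, if 2 * nl x ≤ nv x then wt y u x else 0
/-- plus series -/
noncomputable def Ps (y u : ℝ) : ℝ≥0∞ := ∑' x : U, if nv x < 2 * nl x then wt y u x else 0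

theorem As_eq (y u : ℝ) : As y u = Ms y u + Ps y u := by
  unfold As Ms Ps
  rw [← ENNReal.tsum_add]
  refine tsum_congr fun x => ?_
  by_cases h : 2 * nl x ≤ nv x
  · simp [h, not_lt.2 h]
  · simp [h, not_le.1 h]

theorem wt_mono {y y' u : ℝ} (hu : 0 < u) (hy : 0 ≤ y) (h : y ≤ y') (x : U) :
    wt y u x ≤ wt y' u x := by
  unfold wt
  apply ENNReal.ofReal_le_ofReal
  gcongr

theorem As_mono {y y' u : ℝ} (hu : 0 < u) (hy : 0 ≤ y) (h : y ≤ y') : As y u ≤ As y' u :=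
  ENNReal.tsum_le_tsum fun x => wt_mono hu hy h x

theorem Ms_mono {y y' u : ℝ} (hu : 0 < u) (hy : 0 ≤ y) (h : y ≤ y') : Ms y u ≤ Ms y' u := by
  refine ENNReal.tsum_le_tsum fun x => ?_
  split_ifs
  · exact wt_mono hu hy h x
  · exact le_rfl

theorem Ps_mono {y y' u : ℝ} (hu : 0 < u) (hy : 0 ≤ y) (h : y ≤ y') : Ps y u ≤ Ps y' u := by
  refine ENNReal.tsum_le_tsum fun x => ?_
  split_ifs
  · exact wt_mono hu hy h x
  · exact le_rfl

theorem Ms_anti {y u v : ℝ} (hu : 0 < u) (hy : 0 ≤ y) (h : u ≤ v) : Ms y v ≤ Ms y u := by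
  refine ENNReal.tsum_le_tsum fun x => ?_
  split_ifs with hx
  · unfold wt
    apply ENNReal.ofReal_le_ofReal
    obtain ⟨m, hm⟩ : ∃ m : ℕ, 2 * (nl x : ℤ) - nv x = -(m : ℤ) := ⟨nv x - 2 * nl x, by omega⟩
    rw [hm, zpow_neg, zpow_neg, zpow_natCast, zpow_natCast]
    gcongr
  · exact le_rfl

theorem Ps_mono_u {y u v : ℝ} (hu : 0 < u) (hy : 0 ≤ y) (h : u ≤ v) : Ps y u ≤ Ps y v := by
  refine ENNReal.tsum_le_tsum fun x => ?_
  split_ifs with hx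
  · unfold wt
    apply ENNReal.ofReal_le_ofReal
    obtain ⟨m, hm⟩ : ∃ m : ℕ, 2 * (nl x : ℤ) - nv x = (m : ℤ) := ⟨2 * nl x - nv x, by omega⟩
    rw [hm, zpow_natCast, zpow_natCast]
    gcongr
  · exact le_rfl

theorem cw_real {y : ℝ} (hy : 0 < y) (x : U) :
    cw (ENNReal.ofReal y) x = ENNReal.ofReal (y ^ (nv x + 1) / 2) := by
  unfold cw
  rw [ENNReal.ofReal_div_of_pos (by norm_num), ENNReal.ofReal_pow hy.le]
  norm_num

theorem gs0_le {y u : ℝ} (hy : 0 < y) (hu : 0 < u) :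
    gs (ENNReal.ofReal y) 0 ≤ ENNReal.ofReal (y / (2 * u)) * Ps y u := by
  unfold gs Ps
  rw [← ENNReal.tsum_mul_left]
  refine ENNReal.tsum_le_tsum fun x => ?_
  split_ifs with h1 h2
  · rw [cw_real hy]
    unfold wt
    rw [← ENNReal.ofReal_mul (by positivity)]
    apply ENNReal.ofReal_le_ofReal
    unfold dl at h1
    rw [show 2 * (nl x : ℤ) - nv x = 1 by omega, zpow_one]
    apply le_of_eq
    field_simp
    ring
  · unfold dl at h1; omega
  · exact bot_le
  · exact bot_le

theorem gs1_le {y u : ℝ} (hy : 0 < y) :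
    gs (ENNReal.ofReal y) (-1) ≤ ENNReal.ofReal (y / 2) * Ms y u := by
  unfold gs Ms
  rw [← ENNReal.tsum_mul_left]
  refine ENNReal.tsum_le_tsum fun x => ?_
  split_ifs with h1 h2
  · rw [cw_real hy]
    unfold wt
    rw [← ENNReal.ofReal_mul (by positivity)]
    apply ENNReal.ofReal_le_ofReal
    unfold dl at h1
    rw [show 2 * (nl x : ℤ) - nv x = 0 by omega, zpow_zero]
    apply le_of_eq
    field_simp
    ring
  · unfold dl at h1; omega
  · exact bot_le
  · exact bot_le

theorem summable_natAbs {q : ℝ} (h0 : 0 ≤ q) (h1 : q < 1) : Summable fun d : ℤ => q ^ d.natAbs := by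
  rw [summable_int_iff_summable_nat_and_neg]
  constructor <;> simpa using summable_geometric_of_lt_one h0 h1

theorem key_fin {y y' : ℝ} (hy' : 0 < y') (hlt : y' < y) (h : gs (ENNReal.ofReal y) 0 ≠ ∞) :
    ∃ u : ℝ, 0 < u ∧ As y' u ≠ ∞ := by
  have hy : 0 < y := hy'.trans hlt
  obtain ⟨u, hu, hb⟩ := gs_bound (by simpa using hy) h
  refine ⟨u, hu, ?_⟩
  set q := y' / y with hq
  have hq0 : 0 < q := by positivity
  have hq1 : q < 1 := by rw [hq, div_lt_one hy]; exact hlt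
  have hterm : ∀ x, wt y' u x ≤ ENNReal.ofReal (2 * u / y') *
      (ENNReal.ofReal (q ^ (dl x).natAbs) * (cw (ENNReal.ofReal y) x * ENNReal.ofReal (u ^ dl x))) := by
    intro x
    rw [cw_real hy, ← ENNReal.ofReal_mul (by positivity), ← ENNReal.ofReal_mul (by positivity),
      ← ENNReal.ofReal_mul (by positivity)]
    apply ENNReal.ofReal_le_ofReal
    have h1 : q ^ (nv x + 1) ≤ q ^ (dl x).natAbs := by
      apply pow_le_pow_of_le_one hq0.le hq1.le
      have := nl_le x
      unfold dl
      omega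
    have h2 : u ^ (2 * (nl x : ℤ) - nv x) = u ^ dl x * u := by
      rw [← zpow_add_one₀ hu.ne']; congr 1; unfold dl; ring
    calc y' ^ nv x * u ^ (2 * (nl x : ℤ) - nv x)
        = 2 * u / y' * (q ^ (nv x + 1) * (y ^ (nv x + 1) / 2 * u ^ dl x)) := by
          rw [h2, hq, div_pow, pow_succ y']; field_simp
      _ ≤ _ := by gcongr
  have hsum : As y' u ≤ ENNReal.ofReal (2 * u / y') * ∑' d : ℤ, ENNReal.ofReal (q ^ d.natAbs) := by
    calc As y' u ≤ ∑' x, ENNReal.ofReal (2 * u / y') *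
      (ENNReal.ofReal (q ^ (dl x).natAbs) * (cw (ENNReal.ofReal y) x * ENNReal.ofReal (u ^ dl x))) :=
          ENNReal.tsum_le_tsum hterm
      _ = ENNReal.ofReal (2 * u / y') * ∑' x, ∑' d : ℤ, ENNReal.ofReal (q ^ d.natAbs) *
          ((if dl x = d then cw (ENNReal.ofReal y) x else 0) * ENNReal.ofReal (u ^ d)) := by
          rw [ENNReal.tsum_mul_left]
          congr 1
          refine tsum_congr fun x => ?_
          rw [tsum_eq_single (dl x)]
          · simp
          · intro d hd; simp [hd.symm]
      _ = ENNReal.ofReal (2 * u / y') * ∑' d : ℤ, ENNReal.ofReal (q ^ d.natAbs) *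
          (gs (ENNReal.ofReal y) d * ENNReal.ofReal (u ^ d)) := by
          rw [ENNReal.tsum_comm]
          congr 1
          refine tsum_congr fun d => ?_
          rw [ENNReal.tsum_mul_left, ENNReal.tsum_mul_right, gs]
      _ ≤ _ := by
          gcongr with d
          calc _ ≤ ENNReal.ofReal (q ^ d.natAbs) * 1 := by gcongr; exact hb d
            _ = _ := mul_one _
  refine ne_top_of_le_ne_top (ENNReal.mul_ne_top ENNReal.ofReal_ne_top ?_) hsum
  exact (summable_natAbs hq0.le hq1).tsum_ofReal_ne_top

theorem key_top {y y' : ℝ} (hy' : 0 < y') (hlt : y' < y) (h : ∀ u : ℝ, 0 < u → As y' u = ∞)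
    {u : ℝ} (hu : 0 < u) : Ms y u = ∞ ∧ Ps y u = ∞ := by
  have hy : 0 < y := hy'.trans hlt
  have h0 : gs (ENNReal.ofReal y) 0 = ∞ := by
    by_contra hne
    obtain ⟨u, hu, hA⟩ := key_fin hy' hlt hne
    exact hA (h u hu)
  have hY : ENNReal.ofReal y ≠ 0 := by simpa using hy
  constructor
  · by_contra hne
    have h1 := gs_super (ENNReal.ofReal y) 0 (-1)
    rw [h0, ENNReal.top_mul (gs_ne_zero hY _), zero_add] at h1
    exact ENNReal.mul_ne_top ENNReal.ofReal_ne_top hne (top_le_iff.1 (h1.trans (gs1_le hy)))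
  · by_contra hne
    exact ENNReal.mul_ne_top ENNReal.ofReal_ne_top hne (top_le_iff.1 (h0 ▸ gs0_le hy hu))

theorem y_bound {y u : ℝ} (hy : 0 < y) (hu : 0 < u) (h : As y u ≠ ∞) : y ≤ 2 := by
  have hP : Ps y u ≠ ∞ := ne_top_of_le_ne_top h (by rw [As_eq]; exact le_add_self)
  have h0 : gs (ENNReal.ofReal y) 0 ≠ ∞ :=
    ne_top_of_le_ne_top (ENNReal.mul_ne_top ENNReal.ofReal_ne_top hP) (gs0_le hy hu)
  have h1 := gs0_le_one h0
  obtain ⟨a, ha, ha'⟩ := ex_pos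
  obtain ⟨b, hb, hb'⟩ := ex_neg
  have h2 := cw_le_gs (ENNReal.ofReal y) (jn (a, b))
  rw [dl_jn, ha, hb, cw_real hy, nv_jn, ha', hb', add_neg_cancel] at h2
  have h3 := h2.trans h1
  rw [ENNReal.ofReal_le_one] at h3
  norm_num at h3
  by_contra hlt
  push Not at hlt
  have : (2 : ℝ) ^ 8 ≤ y ^ 8 := by gcongr
  linarith

theorem conv {F : ℕ × ℕ → ℝ} (hF : ∀ p, 0 ≤ F p) :
    Summable (fun p : ℕ × ℕ => (aCount p.1 p.2 : ℝ) * F p) ↔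
      ∑' x : U, ENNReal.ofReal (F (nv x, nl x)) ≠ ∞ := by
  have h1 : ∑' x : U, ENNReal.ofReal (F (nv x, nl x)) =
      ∑' p : ℕ × ℕ, ENNReal.ofReal ((aCount p.1 p.2 : ℝ) * F p) := by
    rw [ENNReal.tsum_sigma']
    refine tsum_congr fun p => ?_
    change ∑' _ : Q p.1 p.2, ENNReal.ofReal (F p) = _
    rw [ENNReal.tsum_const, ENNReal.ofReal_mul (by positivity), ENNReal.ofReal_natCast]
    congr 1
    rw [ENat.card_eq_coe_natCard]
    rfl
  rw [h1]
  constructor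
  · intro h; exact h.tsum_ofReal_ne_top
  · intro h
    have := ENNReal.summable_toReal h
    refine this.congr fun p => ?_
    rw [ENNReal.toReal_ofReal (mul_nonneg (by positivity) (hF p))]

theorem wt_eq {x ζ : ℝ} (hζ : 0 < ζ) (a : U) :
    wt (x * √ζ) (√ζ) a = ENNReal.ofReal (x ^ nv a * ζ ^ nl a) := by
  unfold wt
  congr 1
  have hs : 0 < √ζ := Real.sqrt_pos.2 hζ
  rw [zpow_sub₀ hs.ne', zpow_mul, mul_pow, zpow_natCast, zpow_natCast, zpow_ofNat, Real.sq_sqrt hζ.le]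
  field_simp

theorem sum_A {x ζ : ℝ} (hx : 0 < x) (hζ : 0 < ζ) :
    Summable (fun p : ℕ × ℕ => (aCount p.1 p.2 : ℝ) * x ^ p.1 * ζ ^ p.2) ↔
      As (x * √ζ) (√ζ) ≠ ∞ := by
  simp only [mul_assoc, As, wt_eq hζ]
  exact conv (F := fun p => x ^ p.1 * ζ ^ p.2) (fun p => by positivity)

theorem aCount_zero {n k : ℕ} (h : n < k) : aCount n k = 0 := by
  have : IsEmpty (Q n k) := ⟨fun q => by
    have := nl_le ⟨(n, k), q⟩
    exact absurd this (not_le.2 h)⟩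
  exact Nat.card_of_isEmpty

theorem sum_gen {x ζ : ℝ} (hx : 0 < x) (hζ : 0 < ζ) (c : ℕ → ℕ → Prop) [∀ n k, Decidable (c n k)] :
    Summable (fun n : ℕ => (∑' k : ℕ, if c n k then (aCount n k : ℝ) * ζ ^ k else 0) * x ^ n) ↔
      ∑' a : U, (if c (nv a) (nl a) then wt (x * √ζ) (√ζ) a else 0) ≠ ∞ := by
  have h1 := conv (F := fun p => if c p.1 p.2 then x ^ p.1 * ζ ^ p.2 else 0)
    (fun p => by split_ifs <;> positivity)
  have h2 : ∀ a : U, (if c (nv a) (nl a) then wt (x * √ζ) (√ζ) a else 0) =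
      ENNReal.ofReal (if c (nv a) (nl a) then x ^ nv a * ζ ^ nl a else 0) := by
    intro a
    split_ifs
    · exact wt_eq hζ a
    · simp
  simp only [h2]
  rw [← h1, summable_prod_of_nonneg]
  · have h3 : ∀ n : ℕ, Summable fun k : ℕ =>
        (aCount n k : ℝ) * (if c n k then x ^ n * ζ ^ k else 0) := by
      intro n
      refine summable_of_ne_finset_zero (s := Finset.range (n + 1)) fun k hk => ?_
      rw [aCount_zero (by simpa using hk)]
      simp
    simp only [h3, implies_true, true_and]
    refine summable_congr fun n => ?_
    rw [← tsum_mul_right]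
    refine tsum_congr fun k => ?_
    split_ifs <;> ring
  · intro p
    simp only [Pi.zero_apply]
    split_ifs <;> positivity

theorem sum_M {x ζ : ℝ} (hx : 0 < x) (hζ : 0 < ζ) :
    Summable (fun n : ℕ => aMinusP n ζ * x ^ n) ↔ Ms (x * √ζ) (√ζ) ≠ ∞ :=
  sum_gen hx hζ (fun n k => 2 * k ≤ n)

theorem sum_P {x ζ : ℝ} (hx : 0 < x) (hζ : 0 < ζ) :
    Summable (fun n : ℕ => aPlusP n ζ * x ^ n) ↔ Ps (x * √ζ) (√ζ) ≠ ∞ :=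
  sum_gen hx hζ (fun n k => n < 2 * k)

theorem rhat_nonneg (ω : ℝ) : 0 ≤ rhat ω :=
  mul_nonneg (Real.sSup_nonneg fun _ hx => hx.1.le) (Real.sqrt_nonneg _)

theorem lt_rhat {y ω : ℝ} (hω : 0 < ω) (hy : 0 < y) (h : y < rhat ω) : As y (√ω) ≠ ∞ := by
  have hs : 0 < √ω := Real.sqrt_pos.2 hω
  have h1 : y / √ω < rFun ω := by rw [div_lt_iff₀ hs]; exact h
  have hne : {x : ℝ | 0 < x ∧
    Summable (fun p : ℕ × ℕ => (aCount p.1 p.2 : ℝ) * x ^ p.1 * ω ^ p.2)}.Nonempty := by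
    by_contra he
    rw [Set.not_nonempty_iff_eq_empty] at he
    rw [rFun, he, Real.sSup_empty] at h1
    exact absurd h1 (not_lt.2 (by positivity))
  obtain ⟨x, ⟨hx, hxs⟩, hlt⟩ := exists_lt_of_lt_csSup hne h1
  rw [sum_A hx hω] at hxs
  refine ne_top_of_le_ne_top hxs (As_mono hs hy.le ?_)
  rw [div_lt_iff₀ hs] at hlt
  exact hlt.le

theorem rhat_lt {y ω : ℝ} (hω : 0 < ω) (h : rhat ω < y) : As y (√ω) = ∞ := by
  have hs : 0 < √ω := Real.sqrt_pos.2 hω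
  by_contra hne
  have hy : 0 < y := (rhat_nonneg ω).trans_lt h
  have hmem : y / √ω ∈ {x : ℝ | 0 < x ∧
    Summable (fun p : ℕ × ℕ => (aCount p.1 p.2 : ℝ) * x ^ p.1 * ω ^ p.2)} := by
    refine ⟨by positivity, ?_⟩
    rw [sum_A (by positivity) hω, div_mul_cancel₀ _ hs.ne']
    exact hne
  have hb : BddAbove {x : ℝ | 0 < x ∧
    Summable (fun p : ℕ × ℕ => (aCount p.1 p.2 : ℝ) * x ^ p.1 * ω ^ p.2)} := by
    refine ⟨2 / √ω, ?_⟩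
    rintro x ⟨hx, hxs⟩
    rw [sum_A hx hω] at hxs
    rw [le_div_iff₀ hs]
    exact y_bound (by positivity) hs hxs
  have h1 : y / √ω ≤ rFun ω := le_csSup hb hmem
  rw [div_le_iff₀ hs] at h1
  exact absurd h (not_lt.2 h1)

theorem quasi {a b c : ℝ} (ha : 0 < a) (hab : a ≤ b) (hbc : b ≤ c) :
    min (rhat a) (rhat c) ≤ rhat b := by
  by_contra hlt
  push Not at hlt
  obtain ⟨y, h1, h2⟩ := exists_between hlt
  have hy : 0 < y := (rhat_nonneg b).trans_lt h1
  have hA := rhat_lt (ha.trans_le hab) h1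
  have h3 := lt_rhat ha hy (h2.trans_le (min_le_left _ _))
  have h4 := lt_rhat (ha.trans_le (hab.trans hbc)) hy (h2.trans_le (min_le_right _ _))
  rw [As_eq] at hA h3 h4
  have hsa : 0 < √a := Real.sqrt_pos.2 ha
  have hsb : 0 < √b := Real.sqrt_pos.2 (ha.trans_le hab)
  have h5 := Ms_anti hsa hy.le (Real.sqrt_le_sqrt hab)
  have h6 := Ps_mono_u hsb hy.le (Real.sqrt_le_sqrt hbc)
  rw [ENNReal.add_ne_top] at h3 h4
  rcases ENNReal.add_eq_top.1 hA with h | h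
  · rw [h] at h5; exact h3.1 (top_le_iff.1 h5)
  · rw [h] at h6; exact h4.2 (top_le_iff.1 h6)

end P5

/-- Proposition 5: if `r̂` attains its maximum at `z₀ > 0` (with `x₀ = r̂(z₀)`),
then `r̂_−(ζ) = max_{0<ω≤ζ} r̂(ω)` equals `r̂(ζ)` for `ζ ≤ z₀` and `x₀` for
`ζ ≥ z₀`, `r̂_+(ζ) = sup_{ω≥ζ} r̂(ω)` equals `r̂(ζ)` for `ζ ≥ z₀` and `x₀` for
`ζ ≤ z₀`, and the radii of convergence of `Σ_n a_n^−(ζ) x^n` and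
`Σ_n a_n^+(ζ) x^n` are `r̂_−(ζ)/√ζ` and `r̂_+(ζ)/√ζ` respectively. -/
theorem proposition5 (z₀ : ℝ) (hz₀ : 0 < z₀)
    (hmax : ∀ ζ : ℝ, 0 < ζ → rhat ζ ≤ rhat z₀)
    (ζ : ℝ) (hζ : 0 < ζ) :
    (sSup {y : ℝ | ∃ ω : ℝ, 0 < ω ∧ ω ≤ ζ ∧ y = rhat ω} =
      if ζ ≤ z₀ then rhat ζ else rhat z₀) ∧
    (sSup {y : ℝ | ∃ ω : ℝ, ζ ≤ ω ∧ y = rhat ω} =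
      if z₀ ≤ ζ then rhat ζ else rhat z₀) ∧
    (∀ x : ℝ, 0 < x →
      (x < (if ζ ≤ z₀ then rhat ζ else rhat z₀) / Real.sqrt ζ →
        Summable (fun n : ℕ => aMinusP n ζ * x ^ n)) ∧
      ((if ζ ≤ z₀ then rhat ζ else rhat z₀) / Real.sqrt ζ < x →
        ¬ Summable (fun n : ℕ => aMinusP n ζ * x ^ n))) ∧
    (∀ x : ℝ, 0 < x →
      (x < (if z₀ ≤ ζ then rhat ζ else rhat z₀) / Real.sqrt ζ →
        Summable (fun n : ℕ => aPlusP n ζ * x ^ n)) ∧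
      ((if z₀ ≤ ζ then rhat ζ else rhat z₀) / Real.sqrt ζ < x →
        ¬ Summable (fun n : ℕ => aPlusP n ζ * x ^ n))) := by
  have hs : 0 < √ζ := Real.sqrt_pos.2 hζ
  have hs0 : 0 < √z₀ := Real.sqrt_pos.2 hz₀
  -- above the maximum every series diverges
  have hall : ∀ y, rhat z₀ < y → ∀ u : ℝ, 0 < u → P5.Ms y u = ⊤ ∧ P5.Ps y u = ⊤ := by
    intro y hy u hu
    obtain ⟨y', h1, h2⟩ := exists_between hy
    refine P5.key_top ((P5.rhat_nonneg _).trans_lt h1) h2 (fun v hv => ?_) hu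
    have h3 := P5.rhat_lt (ω := v ^ 2) (by positivity) ((hmax _ (by positivity)).trans_lt h1)
    rwa [Real.sqrt_sq hv.le] at h3
  refine ⟨?_, ?_, ?_, ?_⟩
  · apply IsGreatest.csSup_eq
    split_ifs with h
    · refine ⟨⟨ζ, hζ, le_rfl, rfl⟩, ?_⟩
      rintro _ ⟨ω, h1, h2, rfl⟩
      have := P5.quasi h1 h2 h
      rwa [min_eq_left (hmax ω h1)] at this
    · refine ⟨⟨z₀, hz₀, (not_le.1 h).le, rfl⟩, ?_⟩
      rintro _ ⟨ω, h1, h2, rfl⟩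
      exact hmax ω h1
  · apply IsGreatest.csSup_eq
    split_ifs with h
    · refine ⟨⟨ζ, le_rfl, rfl⟩, ?_⟩
      rintro _ ⟨ω, h1, rfl⟩
      have := P5.quasi hz₀ h h1
      rwa [min_eq_right (hmax ω (hζ.trans_le h1))] at this
    · refine ⟨⟨z₀, (not_le.1 h).le, rfl⟩, ?_⟩
      rintro _ ⟨ω, h1, rfl⟩
      exact hmax ω (hζ.trans_le h1)
  · intro x hx
    have hy : 0 < x * √ζ := by positivity
    rw [P5.sum_M hx hζ, lt_div_iff₀ hs, div_lt_iff₀ hs]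
    generalize x * √ζ = y at *
    constructor
    · intro h
      split_ifs at h with hc
      · have := P5.lt_rhat hζ hy h
        rw [P5.As_eq, ENNReal.add_ne_top] at this
        exact this.1
      · have := P5.lt_rhat hz₀ hy h
        rw [P5.As_eq, ENNReal.add_ne_top] at this
        exact ne_top_of_le_ne_top this.1
          (P5.Ms_anti hs0 hy.le (Real.sqrt_le_sqrt (not_le.1 hc).le))
    · intro h
      rw [not_not]
      split_ifs at h with hc
      · rcases (hmax ζ hζ).lt_or_eq with hlt | heq
        · obtain ⟨y', h1, h2⟩ := exists_between (lt_min h hlt)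
          have hy' : 0 < y' := (P5.rhat_nonneg _).trans_lt h1
          have hA := P5.rhat_lt hζ h1
          have hB := P5.lt_rhat hz₀ hy' (h2.trans_le (min_le_right _ _))
          rw [P5.As_eq, ENNReal.add_ne_top] at hB
          have hP := ne_top_of_le_ne_top hB.2
            (P5.Ps_mono_u hs hy'.le (Real.sqrt_le_sqrt hc))
          rw [P5.As_eq, ENNReal.add_eq_top] at hA
          have hM := hA.resolve_right hP
          exact top_le_iff.1 (hM ▸ P5.Ms_mono hs hy'.le (h2.trans_le (min_le_left _ _)).le)
        · exact (hall y (heq ▸ h) _ hs).1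
      · exact (hall y h _ hs).1
  · intro x hx
    have hy : 0 < x * √ζ := by positivity
    rw [P5.sum_P hx hζ, lt_div_iff₀ hs, div_lt_iff₀ hs]
    generalize x * √ζ = y at *
    constructor
    · intro h
      split_ifs at h with hc
      · have := P5.lt_rhat hζ hy h
        rw [P5.As_eq, ENNReal.add_ne_top] at this
        exact this.2
      · have := P5.lt_rhat hz₀ hy h
        rw [P5.As_eq, ENNReal.add_ne_top] at this
        exact ne_top_of_le_ne_top this.2
          (P5.Ps_mono_u hs hy.le (Real.sqrt_le_sqrt (not_le.1 hc).le))
    · intro h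
      rw [not_not]
      split_ifs at h with hc
      · rcases (hmax ζ hζ).lt_or_eq with hlt | heq
        · obtain ⟨y', h1, h2⟩ := exists_between (lt_min h hlt)
          have hy' : 0 < y' := (P5.rhat_nonneg _).trans_lt h1
          have hA := P5.rhat_lt hζ h1
          have hB := P5.lt_rhat hz₀ hy' (h2.trans_le (min_le_right _ _))
          rw [P5.As_eq, ENNReal.add_ne_top] at hB
          have hP := ne_top_of_le_ne_top hB.1
            (P5.Ms_anti hs0 hy'.le (Real.sqrt_le_sqrt hc))
          rw [P5.As_eq, ENNReal.add_eq_top] at hA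
          have hM := hA.resolve_left hP
          exact top_le_iff.1 (hM ▸ P5.Ps_mono hs hy'.le (h2.trans_le (min_le_left _ _)).le)
        · exact (hall y (heq ▸ h) _ hs).2
      · exact (hall y h _ hs).2
end

section
/- Let a_n^+ := Σ_{k > n/2} a_{n,k} denote the number of rooted trees with n vertices more than half of whose vertices are leaves. Then for all integers n, m ≥ 1 one has a_n^+ · a_m^+ ≤ 2 · a_{n+m+2}^+. -/
open SimpleGraph

/-- `a_n^+ = Σ_{k > n/2} a_{n,k}`: the number of rooted trees with `n`
vertices more than half of whose vertices are leaves. -/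
noncomputable def aPlusN (n : ℕ) : ℕ :=
  Nat.card (Quotient (Setoid.comap
    (Subtype.val : {t : RTree n // n < 2 * numLeaves t} → RTree n)
    (treeSetoid n)))

/-- Rooted trees of arbitrary size. -/
abbrev STree := Σ n : ℕ, RTree n

def HIso (a b : STree) : Prop := ∃ e : a.2.adj ≃g b.2.adj, e a.2.root = b.2.root

lemma HIso.symm {a b : STree} (h : HIso a b) : HIso b a := by
  obtain ⟨e, he⟩ := h
  exact ⟨e.symm, by rw [← he]; exact e.symm_apply_apply _⟩

lemma HIso.trans {a b c : STree} (h : HIso a b) (h' : HIso b c) : HIso a c := by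
  obtain ⟨e, he⟩ := h
  obtain ⟨f, hf⟩ := h'
  exact ⟨e.trans f, by simp [RelIso.trans_apply, he, hf]⟩

abbrev GV {k : ℕ} (t : Fin k → STree) := Option (Σ i, Fin (t i).1)

inductive GAdj_s8 {k : ℕ} (t : Fin k → STree) : GV t → GV t → Prop
  | down (i) : GAdj_s8 t none (some ⟨i, (t i).2.root⟩)
  | up (i) : GAdj_s8 t (some ⟨i, (t i).2.root⟩) none
  | edge (i) (x y : Fin (t i).1) (h : (t i).2.adj.Adj x y) : GAdj_s8 t (some ⟨i, x⟩) (some ⟨i, y⟩)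

def GG {k : ℕ} (t : Fin k → STree) : SimpleGraph (GV t) where
  Adj := GAdj_s8 t
  symm := ⟨by
    intro a b h
    cases h with
    | down i => exact .up i
    | up i => exact .down i
    | edge i x y h => exact .edge i y x h.symm⟩
  loopless := ⟨by
    intro a h
    rcases a with _ | ⟨i, x⟩
    · cases h
    · cases h with
      | edge i x y h => exact (t i).2.adj.loopless.irrefl _ h⟩

lemma GG_edge {k : ℕ} {t : Fin k → STree} {i} {x y : Fin (t i).1} :
    (GG t).Adj (some ⟨i, x⟩) (some ⟨i, y⟩) ↔ (t i).2.adj.Adj x y := by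
  constructor
  · intro h
    cases h with
    | edge i x y h => exact h
  · exact GAdj_s8.edge i x y

lemma GG_none {k : ℕ} {t : Fin k → STree} {i} {x : Fin (t i).1} :
    (GG t).Adj none (some ⟨i, x⟩) ↔ x = (t i).2.root := by
  constructor
  · intro h
    cases h with
    | down i => rfl
  · rintro rfl; exact GAdj_s8.down i

lemma reach_of {V W : Type*} {G : SimpleGraph V} {H : SimpleGraph W} (f : V → W)
    (hf : ∀ a b, G.Adj a b → H.Reachable (f a) (f b)) {a b : V} (h : G.Reachable a b) :
    H.Reachable (f a) (f b) := by
  obtain ⟨w⟩ := h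
  induction w with
  | nil => exact Reachable.refl _
  | cons h _ ih => exact (hf _ _ h).trans ih

lemma inv_of {V : Type*} {G : SimpleGraph V} (P : V → Prop)
    (hf : ∀ a b, G.Adj a b → P a → P b) {a b : V} (h : G.Reachable a b) (ha : P a) : P b := by
  obtain ⟨w⟩ := h
  induction w with
  | nil => exact ha
  | cons h _ ih => exact ih (hf _ _ h ha)

lemma GG_connected {k : ℕ} (t : Fin k → STree) : (GG t).Connected := by
  have key : ∀ v, (GG t).Reachable none v := by
    rintro (_ | ⟨i, x⟩)
    · exact Reachable.refl _
    · have h1 : (GG t).Adj none (some ⟨i, (t i).2.root⟩) := GAdj_s8.down i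
      refine h1.reachable.trans ?_
      exact reach_of (fun x => (some ⟨i, x⟩ : GV t))
        (fun a b h => (GG_edge.2 h).reachable) ((t i).2.connected.preconnected _ _)
  exact { preconnected := fun a b => (key a).symm.trans (key b), nonempty := ⟨none⟩ }

lemma GG_acyclic {k : ℕ} (t : Fin k → STree) : (GG t).IsAcyclic := by
  classical
  rw [isAcyclic_iff_forall_adj_isBridge]
  have hroot : ∀ i, (GG t).IsBridge s(none, some ⟨i, (t i).2.root⟩) := by
    intro i
    rw [isBridge_iff]
    intro h
    have := inv_of (P := fun v => ∀ x, v ≠ some ⟨i, x⟩) ?_ h (by simp)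
    · exact this _ rfl
    · intro a b hab ha x hb
      subst hb
      rw [deleteEdges_adj] at hab
      obtain ⟨h1, h2⟩ := hab
      cases h1 with
      | down i => simp at h2
      | edge i y x h => exact ha y rfl
  intro v w h
  cases h with
  | down i => exact hroot i
  | up i => rw [Sym2.eq_swap]; exact hroot i
  | edge i x y h =>
    have hb := isAcyclic_iff_forall_adj_isBridge.1 (t i).2.acyclic h
    rw [isBridge_iff] at hb ⊢
    intro hr
    apply hb
    let f : GV t → Fin (t i).1 := fun v => match v with
      | none => (t i).2.root
      | some ⟨j, z⟩ => if hj : j = i then hj ▸ z else (t i).2.root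
    have hf : ∀ z, f (some ⟨i, z⟩) = z := by intro z; simp [f]
    have hfr : ∀ j, f (some ⟨j, (t j).2.root⟩) = (t i).2.root := by
      intro j
      by_cases hj : j = i
      · subst hj; simp [f]
      · simp [f, hj]
    have := reach_of (H := (t i).2.adj.deleteEdges {s(x, y)}) f ?_ hr
    · rwa [hf, hf] at this
    · intro a b hab
      rw [deleteEdges_adj] at hab
      obtain ⟨h1, h2⟩ := hab
      cases h1 with
      | down j => rw [hfr]
      | up j => rw [hfr]
      | edge j u v huv =>
        by_cases hj : j = i
        · subst hj
          rw [hf, hf]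
          apply Adj.reachable
          rw [deleteEdges_adj]
          refine ⟨huv, ?_⟩
          intro h3
          apply h2
          simp only [Set.mem_singleton_iff, Sym2.eq_iff] at h3 ⊢
          rcases h3 with ⟨rfl, rfl⟩ | ⟨rfl, rfl⟩ <;> simp
        · have : f (some ⟨j, u⟩) = f (some ⟨j, v⟩) := by simp [f, hj]
          rw [this]

noncomputable def mkTree {k N : ℕ} (t : Fin k → STree) (e : GV t ≃ Fin N) : RTree N where
  adj := (GG t).comap e.symm
  connected := (Iso.comap e.symm (GG t)).connected_iff.2 (GG_connected t)
  acyclic := (Iso.comap e.symm (GG t)).isAcyclic_iff.2 (GG_acyclic t)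
  root := e none

lemma leaf_nbr {k : ℕ} (t : Fin k → STree) (i) (x : Fin (t i).1) (h : IsLeafV (t i).2 x) :
    ((GG t).neighborSet (some ⟨i, x⟩)).ncard = 1 := by
  rcases h with h | ⟨h, hx⟩
  · have hs : Subsingleton (Fin (t i).1) := by rw [h]; infer_instance
    rw [Set.ncard_eq_one]
    refine ⟨none, ?_⟩
    ext v
    simp only [mem_neighborSet, Set.mem_singleton_iff]
    constructor
    · intro hv
      cases hv with
      | up => rfl
      | edge i x y h => exact absurd (Subsingleton.elim x y) h.ne
    · rintro rfl
      exact (GG_none.2 (Subsingleton.elim _ _)).symm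
  · have : (GG t).neighborSet (some ⟨i, x⟩) =
        (fun y => (some ⟨i, y⟩ : GV t)) '' ((t i).2.adj.neighborSet x) := by
      ext v
      simp only [mem_neighborSet, Set.mem_image]
      constructor
      · intro hv
        cases hv with
        | up => exact absurd rfl hx
        | edge i x y h => exact ⟨y, h, rfl⟩
      · rintro ⟨y, hy, rfl⟩
        exact GG_edge.2 hy
    rw [this, Set.ncard_image_of_injective _ (by intro a b hab; simpa using hab), h]

lemma leaves_ge {k N : ℕ} (t : Fin k → STree) (e : GV t ≃ Fin N) :
    ∑ i, numLeaves (t i).2 ≤ numLeaves (mkTree t e) := by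
  have hl : ∀ i (x : Fin (t i).1), IsLeafV (t i).2 x → IsLeafV (mkTree t e) (e (some ⟨i, x⟩)) := by
    intro i x h
    right
    refine ⟨?_, by simp [mkTree]⟩
    rw [← leaf_nbr t i x h]
    have : (mkTree t e).adj.neighborSet (e (some ⟨i, x⟩)) =
        e '' ((GG t).neighborSet (some ⟨i, x⟩)) := by
      ext v
      rw [Equiv.image_eq_preimage_symm]
      simp [mkTree]
    rw [this, Set.ncard_image_of_injective _ e.injective]
  unfold numLeaves
  rw [← Nat.card_sigma]
  refine Nat.card_le_card_of_injective
    (fun p => ⟨e (some ⟨p.1, p.2.1⟩), hl p.1 p.2.1 p.2.2⟩) ?_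
  rintro ⟨i, x, hx⟩ ⟨j, y, hy⟩ h
  simp only [Subtype.mk.injEq, EmbeddingLike.apply_eq_iff_eq, Option.some.injEq,
    Sigma.mk.injEq] at h
  obtain ⟨rfl, h⟩ := h
  cases h
  rfl

lemma iso_comp {k : ℕ} {t t' : Fin k → STree} (e : GG t ≃g GG t') (h0 : e none = none) {i j}
    (h : e (some ⟨i, (t i).2.root⟩) = some ⟨j, (t' j).2.root⟩) (x : Fin (t i).1) :
    ∃ y, e (some ⟨i, x⟩) = some ⟨j, y⟩ := by
  refine inv_of (G := (t i).2.adj) (P := fun x => ∃ y, e (some ⟨i, x⟩) = some ⟨j, y⟩) ?_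
    ((t i).2.connected.preconnected (t i).2.root x) ⟨_, h⟩
  rintro a b hab ⟨y, hy⟩
  have h1 : (GG t').Adj (e (some ⟨i, a⟩)) (e (some ⟨i, b⟩)) := e.map_adj_iff.2 (GG_edge.2 hab)
  rw [hy] at h1
  have h2 : e (some ⟨i, b⟩) ≠ none := by
    rw [← h0]; intro h; simpa using e.injective h
  generalize e (some ⟨i, b⟩) = v at h1 h2
  cases h1 with
  | up => exact absurd rfl h2
  | edge j y z h => exact ⟨z, rfl⟩

lemma iso_main {k : ℕ} {t t' : Fin k → STree} (e : GG t ≃g GG t') (h0 : e none = none) :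
    ∃ σ : Fin k → Fin k, Function.Injective σ ∧ ∀ i, HIso (t i) (t' (σ i)) := by
  have h1 : ∀ i, ∃ j, e (some ⟨i, (t i).2.root⟩) = some ⟨j, (t' j).2.root⟩ := by
    intro i
    have h : (GG t').Adj (e none) (e (some ⟨i, (t i).2.root⟩)) :=
      e.map_adj_iff.2 (GAdj_s8.down i)
    rw [h0] at h
    generalize e (some ⟨i, (t i).2.root⟩) = v at h
    cases h with
    | down j => exact ⟨j, rfl⟩
  choose σ hσ using h1
  refine ⟨σ, ?_, ?_⟩
  · intro i i' h
    have := hσ i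
    rw [h, ← hσ i'] at this
    have := e.injective this
    simp only [Option.some.injEq, Sigma.mk.injEq] at this
    exact this.1
  · intro i
    have hs0 : e.symm none = none := by
      rw [← h0]; exact e.symm_apply_apply _
    have hs : e.symm (some ⟨σ i, (t' (σ i)).2.root⟩) = some ⟨i, (t i).2.root⟩ := by
      rw [← hσ i]; exact e.symm_apply_apply _
    choose f hf using iso_comp e h0 (hσ i)
    choose g hg using iso_comp e.symm hs0 hs
    have hgf : ∀ x, g (f x) = x := by
      intro x
      have := hg (f x)
      rw [← hf x] at this
      have h3 := (e.symm_apply_apply _).symm.trans this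
      simpa using h3.symm
    have hfg : ∀ x, f (g x) = x := by
      intro x
      have := hf (g x)
      rw [← hg x] at this
      have h3 := (e.apply_symm_apply _).symm.trans this
      simpa using h3.symm
    refine ⟨⟨⟨f, g, hgf, hfg⟩, ?_⟩, ?_⟩
    · intro a b
      change (t' (σ i)).2.adj.Adj (f a) (f b) ↔ _
      rw [← GG_edge, ← hf, ← hf, ← GG_edge (t := t)]
      exact e.map_adj_iff
    · change f _ = _
      have := (hf (t i).2.root).symm.trans (hσ i)
      simpa using this

def ptTree : RTree 1 where
  adj := ⊥
  connected := { preconnected := fun a b => by rw [Subsingleton.elim a b],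
                 nonempty := ⟨0⟩ }
  acyclic := isAcyclic_bot
  root := 0

lemma numLeaves_pt : numLeaves ptTree = 1 := by
  unfold numLeaves
  have : ∀ v, IsLeafV ptTree v := fun v => Or.inl rfl
  simp [this]

abbrev trip (a b c : STree) : Fin 3 → STree := ![a, b, c]

lemma trip_card (a b c : STree) : Nat.card (GV (trip a b c)) = a.1 + b.1 + c.1 + 1 := by
  simp [GV, Fin.sum_univ_three]

noncomputable def build {n m : ℕ} (a : RTree n) (b : RTree m) : RTree (n + m + 2) :=
  mkTree (trip ⟨n, a⟩ ⟨m, b⟩ ⟨1, ptTree⟩)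
    (Finite.equivFinOfCardEq (trip_card _ _ _))

lemma build_leaves {n m : ℕ} (a : RTree n) (b : RTree m) (ha : n < 2 * numLeaves a)
    (hb : m < 2 * numLeaves b) : n + m + 2 < 2 * numLeaves (build a b) := by
  have := leaves_ge (trip ⟨n, a⟩ ⟨m, b⟩ ⟨1, ptTree⟩) (Finite.equivFinOfCardEq (trip_card _ _ _))
  rw [Fin.sum_univ_three] at this
  change numLeaves a + numLeaves b + numLeaves ptTree ≤ numLeaves (build a b) at this
  rw [numLeaves_pt] at this
  omega

lemma build_iso {n m : ℕ} {a a' : RTree n} {b b' : RTree m}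
    (h : ∃ e : (build a b).adj ≃g (build a' b').adj, e (build a b).root = (build a' b').root) :
    (HIso ⟨n, a⟩ ⟨n, a'⟩ ∧ HIso ⟨m, b⟩ ⟨m, b'⟩) ∨ (HIso ⟨n, a⟩ ⟨m, b'⟩ ∧ HIso ⟨m, b⟩ ⟨n, a'⟩) := by
  obtain ⟨e, he⟩ := h
  let E := Finite.equivFinOfCardEq (trip_card ⟨n, a⟩ ⟨m, b⟩ ⟨1, ptTree⟩)
  let E' := Finite.equivFinOfCardEq (trip_card ⟨n, a'⟩ ⟨m, b'⟩ ⟨1, ptTree⟩)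
  let i1 := Iso.comap E.symm (GG (trip ⟨n, a⟩ ⟨m, b⟩ ⟨1, ptTree⟩))
  let i2 := Iso.comap E'.symm (GG (trip ⟨n, a'⟩ ⟨m, b'⟩ ⟨1, ptTree⟩))
  let e' := (i1.symm.trans e).trans i2
  have h0 : e' none = none := by
    change E'.symm (e (E none)) = none
    have : e (E none) = E' none := he
    rw [this, Equiv.symm_apply_apply]
  obtain ⟨σ, hσ, H⟩ := iso_main e' h0
  have H0 := H 0
  have H1 := H 1
  have H2 := H 2
  have n01 : σ 0 ≠ σ 1 := fun h => by simpa using hσ h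
  have n02 : σ 0 ≠ σ 2 := fun h => by simpa using hσ h
  have n12 : σ 1 ≠ σ 2 := fun h => by simpa using hσ h
  generalize σ 0 = s0 at *
  generalize σ 1 = s1 at *
  generalize σ 2 = s2 at *
  have key : ∀ s : Fin 3, s = 0 ∨ s = 1 ∨ s = 2 := by decide
  rcases key s0 with rfl | rfl | rfl <;> rcases key s1 with rfl | rfl | rfl <;>
    rcases key s2 with rfl | rfl | rfl <;> first | exact absurd rfl n01 | exact absurd rfl n02 | exact absurd rfl n12 | skip
  · exact Or.inl ⟨H0, H1⟩
  · exact Or.inl ⟨H0, HIso.trans H1 H2⟩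
  · exact Or.inr ⟨H0, H1⟩
  · exact Or.inr ⟨H0, HIso.trans H1 H2⟩
  · exact Or.inr ⟨HIso.trans H0 H2, H1⟩
  · exact Or.inl ⟨HIso.trans H0 H2, H1⟩

instance inst_s8 (n : ℕ) : Finite (RTree n) :=
  Finite.of_injective (fun t : RTree n => (t.adj, t.root)) (by
    rintro ⟨a, b, c, d⟩ ⟨a', b', c', d'⟩ h
    simp only [Prod.mk.injEq] at h
    obtain ⟨rfl, rfl⟩ := h
    rfl)

abbrev Qn (n : ℕ) := Quotient (Setoid.comap
    (Subtype.val : {t : RTree n // n < 2 * numLeaves t} → RTree n)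
    (treeSetoid n))

lemma Qn_eq {n : ℕ} {p q : Qn n} (h : HIso ⟨n, p.out.1⟩ ⟨n, q.out.1⟩) : p = q :=
  Quotient.out_equiv_out.1 h

noncomputable def FF {n m : ℕ} (p : Qn n × Qn m) : Qn (n + m + 2) :=
  Quotient.mk _ ⟨build p.1.out.1 p.2.out.1, build_leaves _ _ p.1.out.2 p.2.out.2⟩

/-- Supermultiplicativity up to a factor 2: `a_n^+ · a_m^+ ≤ 2·a_{n+m+2}^+`. -/
theorem aPlusN_supermultiplicative (n m : ℕ) (hn : 1 ≤ n) (hm : 1 ≤ m) :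
    aPlusN n * aPlusN m ≤ 2 * aPlusN (n + m + 2) := by
  classical
  change Nat.card (Qn n) * Nat.card (Qn m) ≤ 2 * Nat.card (Qn (n + m + 2))
  have := Fintype.ofFinite (Qn n)
  have := Fintype.ofFinite (Qn m)
  have := Fintype.ofFinite (Qn (n + m + 2))
  rw [← Nat.card_prod, Nat.card_eq_fintype_card, Nat.card_eq_fintype_card]
  have key := Finset.card_le_mul_card_image (f := (FF : Qn n × Qn m → _)) Finset.univ 2 ?_
  · exact key.trans (Nat.mul_le_mul_left 2 (Finset.card_le_univ _))
  · intro c _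
    by_contra hc
    rw [not_le, Finset.two_lt_card] at hc
    obtain ⟨x, hx, y, hy, z, hz, hxy, hxz, hyz⟩ := hc
    simp only [Finset.mem_filter, Finset.mem_univ, true_and] at hx hy hz
    have sw : ∀ p q : Qn n × Qn m, FF p = FF q → p ≠ q →
        (HIso ⟨n, p.1.out.1⟩ ⟨m, q.2.out.1⟩ ∧ HIso ⟨m, p.2.out.1⟩ ⟨n, q.1.out.1⟩) := by
      intro p q h hpq
      rcases build_iso (Quotient.exact h) with ⟨h1, h2⟩ | h
      · exact absurd (Prod.ext (Qn_eq h1) (Qn_eq h2)) hpq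
      · exact h
    have h1 := sw x y (hx.trans hy.symm) hxy
    have h2 := sw x z (hx.trans hz.symm) hxz
    exact hyz (Prod.ext (Qn_eq (h1.2.symm.trans h2.2)) (Qn_eq (h1.1.symm.trans h2.1)))
end
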